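/- arXiv:2208.03807 — 2 statements merged into one kernel-verified Lean document; each statement's English description precedes it below -/
import Mathlib

section
/- For every α ∈ (0,1] in the exceptional set ℰ, i.e. every α with Gⁿ(α) ≥ α for all integers n ≥ 1, Nakada's α-continued fraction map T_α has bounded non-full range: there is a full cylinder Δ_α(ε₀,d₀) such that for every endpoint e of every non-full cylinder of T_α and every integer n ≥ 0, T_αⁿ(e) does not lie in the interior of Δ_α(ε₀,d₀). -/
/-!
For exceptional `α` the `T_α`-orbits of both endpoints `α - 1` and `α` stay negative (after the
initial point), so they avoid every positive cylinder.

Let `S` be the set of `y < 1` all of whose Gauss iterates, including `y` itself, are at least `α`.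
The hypothesis says that `α` and `G α` lie in `S`. The set `S - 1` consists of negative numbers
and is `T_α`-invariant (`step`): write `1 / y = a + t` with `t = G y`. If `a ≥ 2`, then
`T_α (y - 1) = s - 1` with `s = 1 / (a - 1 + t)`, and `s > y`, `G s = G y`. If `a = 1`, then
`T_α (y - 1) = G (G y) - 1`.

Every cylinder endpoint other than `α - 1` and `α` is of the form `± 1 / (d + α)` and is mapped
to `α - 1`, while `T_α α = G α - 1`. With `a = ⌊1 / α⌋`, the positive cylinders with `d ≥ a + 2`
are full, and the only other nonempty one is `d = a + 1`, with endpoints `1 / (a + 1 + α)` and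
`α`. The full cylinder `(1, a + 3)` is therefore avoided by all the orbits in question.
-/


open MeasureTheory Set

noncomputable section

/-- Nakada's `α`-continued fraction map on `[α-1, α)`:
`T_α(0) = 0` and `T_α(x) = |1/x| - ⌊|1/x| + 1 - α⌋` for `x ≠ 0`. -/
def nakadaT (α : ℝ) (x : ℝ) : ℝ :=
  if x = 0 then 0 else |1 / x| - ⌊|1 / x| + 1 - α⌋

/-- The sign `ε(x)`: `+1` if `x > 0`, `-1` if `x < 0`. -/
def epsN (x : ℝ) : ℤ := if 0 < x then 1 else -1

/-- The digit `d_α(x) = ⌊|1/x| + 1 - α⌋`. -/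
def dN (α x : ℝ) : ℤ := ⌊|1 / x| + 1 - α⌋

/-- The cylinder `Δ_α(ε,d)` of points of `[α-1, α) ∖ {0}` with digit `(ε,d)`. -/
def cylN (α : ℝ) (ε d : ℤ) : Set ℝ :=
  {x | x ∈ Set.Ico (α - 1) α ∧ x ≠ 0 ∧ epsN x = ε ∧ dN α x = d}

/-- The cylinder `Δ_α(ε,d)` is full when its image under `T_α` is all of `[α-1, α)`. -/
def IsFullCylN (α : ℝ) (ε d : ℤ) : Prop :=
  nakadaT α '' cylN α ε d = Set.Ico (α - 1) α

/-- `T_α` has bounded non-full range: there is a full cylinder `Δ_α(ε₀,d₀)` such that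
the forward `T_α`-orbit of every endpoint of every non-full cylinder avoids its
interior. -/
def BddNonFullRangeN (α : ℝ) : Prop :=
  ∃ ε₀ d₀ : ℤ, IsFullCylN α ε₀ d₀ ∧
    ∀ ε d : ℤ, (cylN α ε d).Nonempty → ¬ IsFullCylN α ε d →
      ∀ e : ℝ, (e = sInf (cylN α ε d) ∨ e = sSup (cylN α ε d)) →
        ∀ n : ℕ, (nakadaT α)^[n] e ∉ interior (cylN α ε₀ d₀)

/-- The Gauss map `G(x) = 1/x - ⌊1/x⌋`, `G(0) = 0`. -/
def gaussMap (x : ℝ) : ℝ := if x = 0 then 0 else 1 / x - ⌊1 / x⌋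

theorem gaussMap_lt_one (x : ℝ) : gaussMap x < 1 := by
  unfold gaussMap
  split_ifs
  · norm_num
  · linarith [Int.lt_floor_add_one (1 / x)]

/-- The points below `1` whose whole Gauss orbit, starting point included, is at least `α`. -/
def GaussAbove (α y : ℝ) : Prop := y < 1 ∧ ∀ n : ℕ, α ≤ gaussMap^[n] y

theorem GaussAbove.map {α y : ℝ} (h : GaussAbove α y) : GaussAbove α (gaussMap y) :=
  ⟨gaussMap_lt_one y, fun n => by simpa using h.2 (n + 1)⟩

theorem one_div_eq_floor_add_gaussMap {y : ℝ} (hy : y ≠ 0) :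
    1 / y = ⌊1 / y⌋ + gaussMap y := by
  simp [gaussMap, hy]

/-- The digit `d_α x` and the image `T_α x`, read off from a decomposition `|1 / x| = d + y` with `y ∈ [α - 1, α)`. -/
theorem nakadaT_eq {α x y : ℝ} {d : ℤ} (hx : x ≠ 0) (h : |1 / x| = d + y)
    (h1 : α - 1 ≤ y) (h2 : y < α) : dN α x = d ∧ nakadaT α x = y := by
  have hf : ⌊|1 / x| + 1 - α⌋ = d := by
    rw [Int.floor_eq_iff, h]
    constructor <;> linarith
  refine ⟨hf, ?_⟩
  rw [nakadaT, if_neg hx, hf, h]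
  ring

/-- The set `{y - 1 | GaussAbove α y}` is invariant under `T_α`. -/
theorem step {α y : ℝ} (hα : 0 < α) (hy : GaussAbove α y) :
    ∃ s, GaussAbove α s ∧ nakadaT α (y - 1) = s - 1 := by
  have hy0 : α ≤ y := hy.2 0
  have hy1 := hy.1
  have ht0 : α ≤ gaussMap y := hy.map.2 0
  have ht1 := gaussMap_lt_one y
  have hyt := one_div_eq_floor_add_gaussMap (y := y) (by linarith)
  have ha1 : 1 ≤ ⌊1 / y⌋ := by
    rw [Int.le_floor, Int.cast_one, le_div_iff₀ (by linarith)]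
    linarith
  have habs : |1 / (y - 1)| = 1 / (1 - y) := by
    rw [abs_div, abs_one, abs_of_neg (by linarith), neg_sub]
  have hne : y - 1 ≠ 0 := by linarith
  set t := gaussMap y with ht
  set a := ⌊1 / y⌋ with ha
  have hyeq : y = 1 / (a + t) := by rw [← hyt, one_div_one_div]
  rcases ha1.eq_or_lt with h1 | h2
  ·
    -- Here `1 / (1 - y) = 1 + 1 / t`, so the first two Gauss digits of `y` are consumed.
    have hu0 : α ≤ gaussMap t := hy.map.map.2 0
    have hu1 := gaussMap_lt_one t
    have htu := one_div_eq_floor_add_gaussMap (y := t) (by linarith)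
    refine ⟨gaussMap t, hy.map.map,
      (nakadaT_eq (d := ⌊1 / t⌋ + 2) hne ?_ (by linarith) (by linarith)).2⟩
    have h : 1 / (1 - y) = 1 + 1 / t := by
      rw [← h1] at hyeq
      have h0 : t ≠ 0 := by linarith
      have h0' : (1 : ℝ) + t ≠ 0 := by linarith
      have : 1 - y = t / (1 + t) := by
        rw [hyeq]; push_cast; field_simp; ring
      rw [this]; field_simp; ring
    rw [habs, h]
    push_cast
    linarith
  · have ha2 : (2 : ℝ) ≤ a := by exact_mod_cast h2
    have hs1 : 1 / ((a : ℝ) - 1 + t) < 1 := by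
      rw [div_lt_one (by linarith)]
      linarith
    have hys : y < 1 / ((a : ℝ) - 1 + t) := by
      rw [hyeq]
      exact one_div_lt_one_div_of_lt (by linarith) (by linarith)
    have hG : gaussMap (1 / ((a : ℝ) - 1 + t)) = t := by
      have hf : ⌊(a : ℝ) - 1 + t⌋ = a - 1 := by
        rw [Int.floor_eq_iff]
        push_cast
        constructor <;> linarith
      rw [gaussMap, if_neg (by linarith), one_div_one_div, hf]
      push_cast
      ring
    refine ⟨1 / ((a : ℝ) - 1 + t), ⟨hs1, fun n => ?_⟩,
      (nakadaT_eq (d := 2) hne ?_ (by linarith) (by linarith)).2⟩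
    · cases n with
      | zero => simpa using (hy0.trans hys.le)
      | succ n =>
        rw [Function.iterate_succ_apply, hG]
        exact hy.map.2 n
    · have h0 : (a : ℝ) - 1 + t ≠ 0 := by linarith
      have h0' : (a : ℝ) + t ≠ 0 := by linarith
      have : 1 - y = (a - 1 + t) / (a + t) := by
        rw [hyeq]; field_simp; ring
      rw [habs, this]
      push_cast
      field_simp
      ring

theorem iterate_neg {α : ℝ} (hα : 0 < α) (n : ℕ) :
    ∀ y, GaussAbove α y → (nakadaT α)^[n] (y - 1) < 0 := by
  induction n with
  | zero => intro y hy; simpa using hy.1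
  | succ n ih =>
    intro y hy
    obtain ⟨s, hs, h⟩ := step hα hy
    rw [Function.iterate_succ_apply, h]
    exact ih s hs

theorem not_mem_cylN_one {α x : ℝ} {d : ℤ} (hx : x < 0) : x ∉ cylN α 1 d := by
  rintro ⟨-, -, h, -⟩
  simp [epsN, not_lt.2 hx.le] at h

theorem nakadaT_mem_Ico {α x : ℝ} (hx : x ≠ 0) : nakadaT α x ∈ Set.Ico (α - 1) α := by
  rw [nakadaT, if_neg hx]
  constructor
  · linarith [Int.floor_le (|1 / x| + 1 - α)]
  · linarith [Int.lt_floor_add_one (|1 / x| + 1 - α)]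

theorem isFullCylN_one {α : ℝ} {d : ℤ} (hα : 0 < α) (hα1 : α < 1) (hd : 1 / α < d - 1 + α) :
    IsFullCylN α 1 d := by
  have hp : 0 < 1 / α := by positivity
  apply Set.Subset.antisymm
  · rintro _ ⟨x, ⟨-, hx, -⟩, rfl⟩
    exact nakadaT_mem_Ico hx
  · rintro y ⟨h1, h2⟩
    have hpos : 0 < (d : ℝ) + y := by linarith
    have hx : 0 < 1 / ((d : ℝ) + y) := by positivity
    obtain ⟨h3, h4⟩ := nakadaT_eq (α := α) (x := 1 / ((d : ℝ) + y)) (y := y) (d := d) hx.ne'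
      (by rw [one_div_one_div, abs_of_pos hpos]) h1 h2
    refine ⟨_, ⟨⟨?_, ?_⟩, hx.ne', by simp only [epsN, if_pos hx], h3⟩, h4⟩
    · linarith
    · rw [one_div_lt hpos hα]
      linarith

theorem mem_cylN_one {α x : ℝ} {d : ℤ} (hα1 : α < 1) :
    x ∈ cylN α 1 d ↔ (0 < x ∧ x < α) ∧ d - 1 + α ≤ 1 / x ∧ 1 / x < d + α := by
  constructor
  · rintro ⟨⟨-, h2⟩, -, h4, h5⟩
    have hx : 0 < x := by
      by_contra h
      simp [epsN, h] at h4
    rw [dN, Int.floor_eq_iff, abs_of_pos (by positivity)] at h5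
    exact ⟨⟨hx, h2⟩, by linarith [h5.1], by linarith [h5.2]⟩
  · rintro ⟨⟨hx, h2⟩, h3, h4⟩
    refine ⟨⟨by linarith, h2⟩, hx.ne', by simp only [epsN, if_pos hx], ?_⟩
    rw [dN, Int.floor_eq_iff, abs_of_pos (by positivity)]
    constructor <;> linarith

theorem mem_cylN_neg_one {α x : ℝ} {d : ℤ} (hα : 0 < α) :
    x ∈ cylN α (-1) d ↔ (α - 1 ≤ x ∧ x < 0) ∧ d - 1 + α ≤ 1 / (-x) ∧ 1 / (-x) < d + α := by
  constructor
  · rintro ⟨⟨h1, -⟩, h3, h4, h5⟩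
    have hx : x < 0 := by
      refine lt_of_le_of_ne ?_ h3
      by_contra! h
      simp [epsN, h] at h4
    rw [dN, Int.floor_eq_iff, abs_div, abs_one, abs_of_neg hx] at h5
    exact ⟨⟨h1, hx⟩, by linarith [h5.1], by linarith [h5.2]⟩
  · rintro ⟨⟨h1, hx⟩, h3, h4⟩
    refine ⟨⟨h1, by linarith⟩, hx.ne, by simp only [epsN, if_neg hx.not_gt], ?_⟩
    rw [dN, Int.floor_eq_iff, abs_div, abs_one, abs_of_neg hx]
    constructor <;> linarith

/-- Endpoints of negative cylinders, full or not. -/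
theorem endpoint_neg_one {α : ℝ} {d : ℤ} (hα : 0 < α) (hne : (cylN α (-1) d).Nonempty)
    {e : ℝ} (he : e = sInf (cylN α (-1) d) ∨ e = sSup (cylN α (-1) d)) :
    e = α - 1 ∨ ∃ k : ℤ, 0 < k + α ∧ e = -(1 / (k + α)) := by
  -- Nonemptiness forces `1 < 1 / (1 - α) < d + α`, so that `d ≥ 1` and both `d - 1 + α` and
  -- `d + α` are positive.
  have hd : 1 ≤ d := by
    obtain ⟨x, hx⟩ := hne
    obtain ⟨⟨h1, h2⟩, -, h4⟩ := (mem_cylN_neg_one hα).1 hx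
    have : 1 < 1 / (-x) := by
      rw [lt_div_iff₀ (by linarith)]
      linarith
    have h0 : α < 1 := by linarith
    have : (0 : ℝ) < d := by linarith
    exact_mod_cast this
  have hd' : (1 : ℝ) ≤ d := by exact_mod_cast hd
  have hp1 : 0 < (d : ℝ) - 1 + α := by linarith
  have hp2 : 0 < (d : ℝ) + α := by linarith
  have hcyl : cylN α (-1) d =
      Set.Ico (max (α - 1) (-(1 / ((d : ℝ) - 1 + α)))) (-(1 / ((d : ℝ) + α))) := by
    ext x
    have hq : 0 < 1 / ((d : ℝ) + α) := by positivity
    rw [mem_cylN_neg_one hα, Set.mem_Ico, max_le_iff]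
    constructor
    · rintro ⟨⟨h1, h2⟩, h3, h4⟩
      rw [le_one_div hp1 (by linarith)] at h3
      rw [one_div_lt (by linarith) hp2] at h4
      exact ⟨⟨h1, by linarith⟩, by linarith⟩
    · rintro ⟨⟨h1, h2⟩, h3⟩
      refine ⟨⟨h1, by linarith⟩, ?_, ?_⟩
      · rw [le_one_div hp1 (by linarith)]
        linarith
      · rw [one_div_lt (by linarith) hp2]
        linarith
  rw [hcyl] at he hne
  have hlt := Set.nonempty_Ico.1 hne
  rw [csInf_Ico hlt, csSup_Ico hlt] at he
  rcases he with rfl | rfl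
  · rcases max_choice (α - 1) (-(1 / ((d : ℝ) - 1 + α))) with h | h
    · exact Or.inl h
    · exact Or.inr ⟨d - 1, by push_cast; exact hp1, by rw [h]; push_cast; rfl⟩
  · exact Or.inr ⟨d, hp2, rfl⟩

/-- Endpoints of the only non-full positive cylinder. -/
theorem endpoint_one {α : ℝ} {d : ℤ} (hα : 0 < α) (hG : α ≤ gaussMap α)
    (hne : (cylN α 1 d).Nonempty) (hfull : ¬ IsFullCylN α 1 d)
    {e : ℝ} (he : e = sInf (cylN α 1 d) ∨ e = sSup (cylN α 1 d)) :
    e = 1 / (((⌊1 / α⌋ + 1 : ℤ) : ℝ) + α) ∨ e = α := by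
  have hG1 := gaussMap_lt_one α
  have hα1 : α < 1 := by linarith
  have hdec := one_div_eq_floor_add_gaussMap hα.ne'
  have hp : 0 < 1 / α := by positivity
  have hd : d = ⌊1 / α⌋ + 1 := by
    apply le_antisymm
    · by_contra! h
      have h' : ((⌊1 / α⌋ + 1 + 1 : ℤ) : ℝ) ≤ d := by exact_mod_cast h
      push_cast at h'
      exact hfull (isFullCylN_one hα hα1 (by linarith))
    · obtain ⟨x, hx⟩ := hne
      obtain ⟨⟨h1, h2⟩, -, h4⟩ := (mem_cylN_one hα1).1 hx
      have h5 := one_div_lt_one_div_of_lt h1 h2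
      have : (⌊1 / α⌋ : ℝ) < d := by linarith
      exact_mod_cast this
  have hd' : (d : ℝ) = ⌊1 / α⌋ + 1 := by rw [hd]; push_cast; ring
  rw [← hd]
  have hpos : 0 < (d : ℝ) + α := by linarith
  have hcyl : cylN α 1 d = Set.Ioo (1 / ((d : ℝ) + α)) α := by
    ext x
    have hq : 0 < 1 / ((d : ℝ) + α) := by positivity
    rw [mem_cylN_one hα1, Set.mem_Ioo]
    constructor
    · rintro ⟨⟨h1, h2⟩, h3, h4⟩
      rw [one_div_lt h1 hpos] at h4
      exact ⟨h4, h2⟩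
    · rintro ⟨h1, h2⟩
      have hx : 0 < x := by linarith
      have := one_div_lt_one_div_of_lt hx h2
      refine ⟨⟨hx, h2⟩, by linarith, ?_⟩
      rw [one_div_lt hx hpos]
      exact h1
  rw [hcyl] at he hne
  have hlt := Set.nonempty_Ioo.1 hne
  rwa [csInf_Ioo hlt, csSup_Ioo hlt] at he

/-- For every `α ∈ (0,1]` in the exceptional set, i.e. with
`Gⁿ(α) ≥ α` for all `n ≥ 1` (Carminati–Tiozzo characterization), Nakada's
`α`-continued fraction map has bounded non-full range. -/
theorem stmt3 (α : ℝ) (hα : α ∈ Set.Ioc (0 : ℝ) 1)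
    (hexc : ∀ n : ℕ, 1 ≤ n → α ≤ gaussMap^[n] α) :
    BddNonFullRangeN α := by
  obtain ⟨hα0, -⟩ := hα
  have hG : α ≤ gaussMap α := hexc 1 le_rfl
  have hG1 := gaussMap_lt_one α
  have hα1 : α < 1 := by linarith
  have hS : GaussAbove α α := by
    refine ⟨hα1, fun n => ?_⟩
    rcases Nat.eq_zero_or_pos n with rfl | h
    · simp
    · exact hexc n h
  have hdec := one_div_eq_floor_add_gaussMap hα0.ne'
  -- Once an orbit enters the invariant set, it stays negative.
  have key : ∀ e y : ℝ, GaussAbove α y → nakadaT α e = y - 1 →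
      e ∉ cylN α 1 (⌊1 / α⌋ + 3) →
      ∀ n : ℕ, (nakadaT α)^[n] e ∉ cylN α 1 (⌊1 / α⌋ + 3) := by
    intro e y hy hT he n
    cases n with
    | zero => exact he
    | succ n =>
      rw [Function.iterate_succ_apply, hT]
      exact not_mem_cylN_one (iterate_neg hα0 n y hy)
  refine ⟨1, ⌊1 / α⌋ + 3, isFullCylN_one hα0 hα1 (by push_cast; linarith), ?_⟩
  intro ε d hne hfull e he n hmem
  refine absurd (interior_subset hmem) ?_
  have hε : ε = 1 ∨ ε = -1 := by
    obtain ⟨x, -, -, h, -⟩ := hne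
    rw [← h, epsN]
    split_ifs <;> simp
  rcases hε with rfl | rfl
  · rcases endpoint_one hα0 hG hne hfull he with rfl | rfl
    · have hfl : 0 ≤ ⌊1 / α⌋ := Int.floor_nonneg.2 (by positivity)
      have hfl' : (0 : ℝ) ≤ ⌊1 / α⌋ := by exact_mod_cast hfl
      have hpos : 0 < ((⌊1 / α⌋ + 1 : ℤ) : ℝ) + α := by push_cast; linarith
      obtain ⟨h1, h2⟩ := nakadaT_eq (α := α) (x := 1 / (((⌊1 / α⌋ + 1 : ℤ) : ℝ) + α))
        (y := α - 1) (d := ⌊1 / α⌋ + 2) (by positivity)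
        (by rw [one_div_one_div, abs_of_pos hpos]; push_cast; ring) le_rfl (by linarith)
      refine key _ α hS h2 ?_ n
      rintro ⟨-, -, -, h⟩
      omega
    · refine key _ (gaussMap e) hS.map ?_ (fun h => lt_irrefl _ h.1.2) n
      refine (nakadaT_eq (d := ⌊1 / e⌋ + 1) hα0.ne' ?_ (by linarith) (by linarith)).2
      rw [abs_of_pos (by positivity)]
      push_cast
      linarith
  · rcases endpoint_neg_one hα0 hne he with rfl | ⟨k, hk, rfl⟩
    · exact not_mem_cylN_one (iterate_neg hα0 n α hS)
    · have hq : 0 < 1 / ((k : ℝ) + α) := by positivity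
      refine key _ α hS ?_ (not_mem_cylN_one (by linarith)) n
      refine (nakadaT_eq (d := k + 1) (by linarith) ?_ le_rfl (by linarith)).2
      rw [abs_div, abs_one, abs_neg, abs_of_pos hq, one_div_one_div]
      push_cast
      ring
end
end

section
/- For every α ∈ (0,1) in the exceptional set ℰ (i.e. Gⁿ(α) ≥ α for all integers n ≥ 1), the two-dimensional map 𝒯_α maps Λ_α bijectively onto itself up to μ-measure zero: there are Borel sets Λ₁, Λ₂ ⊆ Λ_α with μ(Λ_α∖Λ₁) = μ(Λ_α∖Λ₂) = 0 such that 𝒯_α restricts to a bijection from Λ₁ onto Λ₂. -/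
/-!
Write `𝒯` for `nakPlanar α`, `Λ` for `LambdaN α` and `d` for `d_α(α)`. The proof shows that `𝒯` maps
`Λ` into itself and onto itself up to null sets; injectivity then comes from measure preservation.

*Invariance.* A letter of `𝒜_α` maps the rectangle of a word `w` into that of `w` followed by the
letter. Any other digit sends `[0, 1]` into `[0, 1 / (d + 1)]`, hence everything into the rectangle
of the empty word. So the union of rectangles is invariant (`nakPlanar_mem_unionN`), and continuity
of `𝒯` at points with abscissa outside `ℚ(α)` carries this over to the closure
(`nakPlanar_mem_genN`).

*Surjectivity.* Rectangles of nonempty words are images by construction. For a point `(x, y)` of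
`[α - 1, α) × [0, 1 / (d + 1)]` write `1 / y = n + t` with `n = ⌊1 / y⌋`. It is the image of
`(X, t)` under the digit `(1, n)`, with `X = 1 / (n + x)`, and of `(-X / (1 + X), 1 - t)` under
`(-1, n + 1)`. So it suffices that `Λ` together with its image under the involution
`(x, y) ↦ (-x / (1 + x), 1 - y)` covers everything over the domain of the latter (`cover_real`).
As `Λ` is closed, rational heights are enough, and these are treated by the Euclidean algorithm
(`cover_rat`): reading `y = 1 / (m + t)`, a last letter `(1, m)` or `(-1, m + 1)` reduces the claim
at `x` to the claim at `X = 1 / (m + x)`, as long as `X < α`. If `X ≥ α`, then `X` is outside the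
domain, but this is exactly the condition under which a run of `m - 1` letters `(-1, 2)` may precede
`-x / (1 + x)`, and this leads to a companion claim linking `-X / (1 + X)` and `X - 1`.

*Injectivity.* Each branch of `𝒯` is injective and preserves `μ` (`muP_planarBranch_image`), and
`μ(Λ)` is finite. The images of the pieces on which the digit is constant have total measure `μ(Λ)`
and cover `Λ` up to a null set, so their overlaps are null (`bijOn_of_piecewise_measurePreserving`).

Of the exceptional condition only `α ≤ G(α)` is needed, in the form `α² + α ≤ 1`.
-/

open MeasureTheory Set

noncomputable section

/-- The Möbius action of a 2×2 real matrix `M = [[a,b],[c,d]]` on `ℝ`. -/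
def moeb (M : Matrix (Fin 2) (Fin 2) ℝ) (x : ℝ) : ℝ :=
  (M 0 0 * x + M 0 1) / (M 1 0 * x + M 1 1)

/-- The Borel measure `dμ = dx dy / (1+xy)²` on the plane. -/
def muP : Measure (ℝ × ℝ) :=
  volume.withDensity fun p => ENNReal.ofReal (((1 + p.1 * p.2) ^ 2)⁻¹)

/-- For a digit `a = (ε,d)`, the matrix `N_a = [[0,1],[ε,d]]`, acting as
`y ↦ 1/(εy + d)`. -/
def Nmat (a : ℤ × ℤ) : Matrix (Fin 2) (Fin 2) ℝ :=
  !![0, 1; (a.1 : ℝ), (a.2 : ℝ)]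

/-- The cylinder `Δ_α(w)` of a finite word `w = a₁⋯a_k` of digits: the set of points
of `[α-1, α)` whose initial digit string is `w` (with orbit avoiding `0`). -/
def cylW (α : ℝ) (w : List (ℤ × ℤ)) : Set ℝ :=
  {x | x ∈ Set.Ico (α - 1) α ∧ ∀ i < w.length,
    (nakadaT α)^[i] x ≠ 0 ∧
      (epsN ((nakadaT α)^[i] x), dN α ((nakadaT α)^[i] x)) = w.getD i (0, 0)}

/-- `N_w = N_{a_k} ⋯ N_{a_1}` for `w = a₁⋯a_k`. -/
def NmatW (w : List (ℤ × ℤ)) : Matrix (Fin 2) (Fin 2) ℝ :=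
  ((w.map Nmat).reverse).prod

/-- The alphabet `𝒜_α = {(-1,d') : 2 ≤ d' ≤ d_α(α)+1} ∪ {(+1, d_α(α))}`. -/
def calA (α : ℝ) : Set (ℤ × ℤ) :=
  {a | (a.1 = -1 ∧ 2 ≤ a.2 ∧ a.2 ≤ dN α α + 1) ∨ a = (1, dN α α)}

/-- `𝓛'_α`: the `α`-admissible words (including the empty word) all of whose letters
lie in `𝒜_α`. -/
def calL (α : ℝ) : Set (List (ℤ × ℤ)) :=
  {w | (cylW α w).Nonempty ∧ ∀ a ∈ w, a ∈ calA α}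

/-- The region `Λ_α`: the closure of
`⋃_{w ∈ 𝓛'_α} T_α^{|w|}(Δ_α(w)) × N_w·[0, 1/(d_α(α)+1)]`. -/
def LambdaN (α : ℝ) : Set (ℝ × ℝ) :=
  closure (⋃ w ∈ calL α,
    ((nakadaT α)^[w.length] '' cylW α w) ×ˢ
      (moeb (NmatW w) '' Set.Icc 0 (((dN α α : ℝ) + 1)⁻¹)))

/-- The two-dimensional map `𝒯_α(x,y) = (T_α(x), N_{(ε(x),d_α(x))}·y)`. -/
def nakPlanar (α : ℝ) (p : ℝ × ℝ) : ℝ × ℝ :=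
  (nakadaT α p.1, moeb (Nmat (epsN p.1, dN α p.1)) p.2)

/-! ### Digits and inverse branches -/

/-- The union of rectangles whose closure is `Λ_α`. -/
def unionN (α : ℝ) : Set (ℝ × ℝ) :=
  ⋃ w ∈ calL α,
    ((nakadaT α)^[w.length] '' cylW α w) ×ˢ
      (moeb (NmatW w) '' Set.Icc 0 (((dN α α : ℝ) + 1)⁻¹))

lemma abs_one_div_pos_branch {α z : ℝ} {n : ℤ} (hz : z ∈ Ico (α - 1) α) (hn : 0 < n + z) :
    nakadaT α (1 / (n + z)) = z ∧ epsN (1 / (n + z)) = 1 ∧ dN α (1 / (n + z)) = n := by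
  have hd : dN α (1 / (n + z)) = n := by
    rw [dN, one_div_one_div, abs_of_pos hn, Int.floor_eq_iff]
    constructor <;> linarith [hz.1, hz.2]
  refine ⟨?_, ?_, hd⟩
  · rw [nakadaT, if_neg (by positivity)]
    rw [dN] at hd
    rw [hd, one_div_one_div, abs_of_pos hn]; ring
  · rw [epsN, if_pos (by positivity)]

lemma abs_one_div_neg_branch {α z : ℝ} {n : ℤ} (hz : z ∈ Ico (α - 1) α) (hn : 0 < n + z) :
    nakadaT α (-1 / (n + z)) = z ∧ epsN (-1 / (n + z)) = -1 ∧ dN α (-1 / (n + z)) = n := by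
  have ha : |1 / (-1 / ((n : ℝ) + z))| = n + z := by
    rw [one_div_div, abs_div, abs_of_pos hn]; norm_num
  have hd : dN α (-1 / (n + z)) = n := by
    rw [dN, ha, Int.floor_eq_iff]
    constructor <;> linarith [hz.1, hz.2]
  have hneg : -1 / ((n : ℝ) + z) < 0 := div_neg_of_neg_of_pos (by norm_num) hn
  refine ⟨?_, ?_, hd⟩
  · rw [nakadaT, if_neg hneg.ne]
    rw [dN] at hd
    rw [hd, ha]; ring
  · rw [epsN, if_neg (by linarith)]

/-- The two inverse branches at once: `ε / (n + z)` has digit `(ε, n)` and is mapped to `z`. -/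
lemma branchN {α z : ℝ} {ε n : ℤ} (hε : ε = 1 ∨ ε = -1) (hz : z ∈ Ico (α - 1) α)
    (hn : 0 < n + z) :
    nakadaT α (ε / (n + z)) = z ∧ epsN (ε / (n + z)) = ε ∧ dN α (ε / (n + z)) = n := by
  rcases hε with rfl | rfl
  · simpa using abs_one_div_pos_branch hz hn
  · simpa using abs_one_div_neg_branch hz hn

lemma epsN_cases (x : ℝ) : epsN x = 1 ∨ epsN x = -1 := by
  unfold epsN; split_ifs <;> simp

lemma nakadaT_of_ne {α x : ℝ} (hx : x ≠ 0) : nakadaT α x = |1 / x| - dN α x := by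
  rw [nakadaT, if_neg hx, dN]

lemma nakadaT_mem {α x : ℝ} (hx : x ≠ 0) : nakadaT α x ∈ Ico (α - 1) α := by
  rw [nakadaT_of_ne hx, dN]
  have h1 := Int.floor_le (|1 / x| + 1 - α)
  have h2 := Int.lt_floor_add_one (|1 / x| + 1 - α)
  constructor <;> linarith

lemma abs_one_div_eq {x : ℝ} (hx : x ≠ 0) : |1 / x| = epsN x / x := by
  unfold epsN
  split_ifs with h
  · rw [abs_of_pos (by positivity)]; simp
  · have : x < 0 := lt_of_le_of_ne (not_lt.1 h) hx
    rw [abs_of_neg (by simpa using this)]; push_cast; ring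

lemma eq_branch {α x : ℝ} (hx : x ≠ 0) : x = epsN x / (dN α x + nakadaT α x) := by
  rw [nakadaT_of_ne hx, add_sub_cancel, abs_one_div_eq hx]
  have : (epsN x : ℝ) ≠ 0 := by rcases epsN_cases x with h | h <;> rw [h] <;> norm_num
  field_simp

lemma nakPlanar_eq (α x y : ℝ) :
    nakPlanar α (x, y) = (nakadaT α x, 1 / (epsN x * y + dN α x)) := by
  simp [nakPlanar, moeb, Nmat]

/-- The image under `𝒯_α` of a point on the inverse branch `(ε, n)`. -/
lemma nakPlanar_branch {α z y : ℝ} {ε n : ℤ} (hε : ε = 1 ∨ ε = -1) (hz : z ∈ Ico (α - 1) α)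
    (hn : 0 < n + z) : nakPlanar α (ε / (n + z), y) = (z, 1 / (ε * y + n)) := by
  obtain ⟨h1, h2, h3⟩ := branchN hε hz hn
  rw [nakPlanar_eq, h1, h2, h3]

lemma dN_self {α : ℝ} (h0 : 0 < α) : (dN α α : ℝ) ≤ 1 / α + 1 - α ∧ 1 / α - α < dN α α := by
  have h1 := Int.floor_le (|1 / α| + 1 - α)
  have h2 := Int.lt_floor_add_one (|1 / α| + 1 - α)
  rw [abs_of_pos (by positivity : 0 < 1 / α)] at h1 h2
  rw [dN, abs_of_pos (by positivity : 0 < 1 / α)]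
  constructor <;> linarith

/-- The bound `α² + α ≤ 1`, i.e. `α ≤ (√5 - 1) / 2`, rewritten for `1 / α`. -/
lemma inv_ge {α : ℝ} (h0 : 0 < α) (hg : α ^ 2 + α ≤ 1) : 1 + α ≤ 1 / α := by
  rw [le_div_iff₀ h0]; nlinarith

lemma lt_one_of {α : ℝ} (h0 : 0 < α) (hg : α ^ 2 + α ≤ 1) : α < 1 := by nlinarith

lemma two_le_dN_self {α : ℝ} (h0 : 0 < α) (hg : α ^ 2 + α ≤ 1) : 2 ≤ dN α α := by
  rw [dN, Int.le_floor, abs_of_pos (by positivity : 0 < 1 / α)]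
  have := inv_ge h0 hg
  push_cast; linarith

lemma two_le_dN_neg {α x : ℝ} (h1 : α < 1) (hx : x ∈ Ico (α - 1) α) (hx0 : x < 0) :
    2 ≤ dN α x := by
  rw [dN, Int.le_floor, abs_of_neg (by simpa using hx0)]
  have h3 : 0 < -x := by linarith
  have h4 : 1 + α ≤ 1 / (-x) := by
    rw [le_div_iff₀ h3]; nlinarith [hx.1, sq_nonneg α]
  rw [one_div_neg_eq_neg_one_div] at h4
  push_cast; linarith

lemma dN_self_le_dN_pos {α x : ℝ} (hx : x ∈ Ico (α - 1) α) (hx0 : 0 < x) :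
    dN α α ≤ dN α x := by
  have h0 : 0 < α := hx0.trans hx.2
  rw [dN, dN]
  apply Int.floor_le_floor
  rw [abs_of_pos (by positivity : 0 < 1 / x), abs_of_pos (by positivity : 0 < 1 / α)]
  have := one_div_le_one_div_of_le hx0 hx.2.le
  linarith

/-- The digits of points of `[α - 1, α)`: the denominators `ε y + d` are at least `1` on
`0 ≤ y ≤ 1`, and digits outside the alphabet `𝒜_α` send `[0, 1]` into `[0, 1 / (d_α(α) + 1)]`. -/
lemma digit_facts {α x y : ℝ} (h0 : 0 < α) (hg : α ^ 2 + α ≤ 1) (hx : x ∈ Ico (α - 1) α)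
    (hx0 : x ≠ 0) (hy : y ∈ Icc (0 : ℝ) 1) :
    1 ≤ (epsN x : ℝ) * y + dN α x ∧
      ((epsN x, dN α x) ∈ calA α ∨ (dN α α : ℝ) + 1 ≤ epsN x * y + dN α x) := by
  have h1 := lt_one_of h0 hg
  have hd := two_le_dN_self h0 hg
  rcases lt_or_gt_of_ne hx0 with h | h
  · have he : epsN x = -1 := by rw [epsN, if_neg (by linarith)]
    have h2 := two_le_dN_neg h1 hx h
    rw [he]
    have h2' : (2 : ℝ) ≤ dN α x := by exact_mod_cast h2
    refine ⟨by push_cast; linarith [hy.2], ?_⟩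
    by_cases h3 : dN α x ≤ dN α α + 1
    · exact Or.inl (Or.inl ⟨rfl, h2, h3⟩)
    · right
      have : dN α α + 2 ≤ dN α x := by omega
      have : (dN α α : ℝ) + 2 ≤ dN α x := by exact_mod_cast this
      push_cast; linarith [hy.2]
  · have he : epsN x = 1 := by rw [epsN, if_pos h]
    have h2 := dN_self_le_dN_pos hx h
    rw [he]
    have h2' : (2 : ℝ) ≤ dN α x := by exact_mod_cast hd.trans h2
    refine ⟨by push_cast; linarith [hy.1], ?_⟩
    by_cases h3 : dN α x = dN α α
    · exact Or.inl (Or.inr (by rw [h3]))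
    · right
      have : dN α α + 1 ≤ dN α x := by omega
      have : (dN α α : ℝ) + 1 ≤ dN α x := by exact_mod_cast this
      push_cast; linarith [hy.1]

/-! ### The union of rectangles as an orbit under letters of the alphabet -/

lemma moeb_mul {M N : Matrix (Fin 2) (Fin 2) ℝ} {y : ℝ} (hN : N 1 0 * y + N 1 1 ≠ 0) :
    moeb (M * N) y = moeb M (moeb N y) := by
  simp only [moeb, Matrix.mul_apply, Fin.sum_univ_two]
  have e : ∀ a b : ℝ, a * ((N 0 0 * y + N 0 1) / (N 1 0 * y + N 1 1)) + b
      = (a * (N 0 0 * y + N 0 1) + b * (N 1 0 * y + N 1 1)) / (N 1 0 * y + N 1 1) := by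
    intro a b; rw [← mul_div_assoc, div_add' _ _ _ hN]
  rw [e, e, div_div_div_cancel_right₀ hN]
  congr 1 <;> ring

lemma NmatW_append (w : List (ℤ × ℤ)) (a : ℤ × ℤ) :
    NmatW (w ++ [a]) = Nmat a * NmatW w := by
  simp [NmatW]

/-- For words in the alphabet, numerator and denominator of `N_w · y` stay ordered, so that
`N_w` maps `[0, 1]` to itself without poles. -/
lemma NmatW_bounds {α : ℝ} (h0 : 0 < α) (hg : α ^ 2 + α ≤ 1) {y : ℝ} (hy : y ∈ Icc (0 : ℝ) 1)
    (w : List (ℤ × ℤ)) (hw : ∀ a ∈ w, a ∈ calA α) :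
    0 ≤ NmatW w 0 0 * y + NmatW w 0 1 ∧
      NmatW w 0 0 * y + NmatW w 0 1 ≤ NmatW w 1 0 * y + NmatW w 1 1 ∧
      0 < NmatW w 1 0 * y + NmatW w 1 1 := by
  induction w using List.reverseRecOn with
  | nil => simpa [NmatW] using hy
  | append_singleton w a ih =>
    obtain ⟨i1, i2, i3⟩ := ih fun b hb => hw b (by simp [hb])
    have ha := hw a (by simp)
    have hd := two_le_dN_self h0 hg
    rw [NmatW_append]
    simp only [Nmat, Matrix.mul_apply, Fin.sum_univ_two, Matrix.of_apply, Matrix.cons_val_zero,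
      Matrix.cons_val_one, zero_mul, one_mul, zero_add]
    set p := NmatW w 0 0 * y + NmatW w 0 1
    set q := NmatW w 1 0 * y + NmatW w 1 1
    have e : ((a.1 : ℝ) * NmatW w 0 0 + a.2 * NmatW w 1 0) * y
        + (a.1 * NmatW w 0 1 + a.2 * NmatW w 1 1) = a.1 * p + a.2 * q := by
      simp only [p, q]; ring
    have key : q ≤ a.1 * p + a.2 * q := by
      rcases ha with ⟨h1, h2, -⟩ | h
      · have h2' : (2 : ℝ) ≤ a.2 := by exact_mod_cast h2
        rw [h1]; push_cast; nlinarith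
      · have h2' : (2 : ℝ) ≤ dN α α := by exact_mod_cast hd
        rw [h]; push_cast; nlinarith
    rw [e]
    exact ⟨i3.le, key, by linarith⟩

lemma inv_dN_self_mem {α : ℝ} (h0 : 0 < α) (hg : α ^ 2 + α ≤ 1) :
    ((dN α α : ℝ) + 1)⁻¹ ≤ 1 := by
  have hd : (2 : ℝ) ≤ dN α α := by exact_mod_cast two_le_dN_self h0 hg
  exact inv_le_one_of_one_le₀ (by linarith)

lemma base_mem_unionN {α x y : ℝ} (hx : x ∈ Ico (α - 1) α)
    (hy : y ∈ Icc (0 : ℝ) ((dN α α : ℝ) + 1)⁻¹) : (x, y) ∈ unionN α := by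
  refine mem_iUnion₂.2 ⟨[], ⟨⟨x, hx, by simp⟩, by simp⟩, ⟨x, ⟨hx, by simp⟩, rfl⟩, ⟨y, hy, ?_⟩⟩
  simp [moeb, NmatW]

lemma nakadaT_iter_mem {α x : ℝ} (h0 : 0 < α) (h1 : α < 1) (hx : x ∈ Ico (α - 1) α) (n : ℕ) :
    (nakadaT α)^[n] x ∈ Ico (α - 1) α := by
  induction n with
  | zero => exact hx
  | succ n ih =>
    rw [Function.iterate_succ_apply']
    by_cases h : (nakadaT α)^[n] x = 0
    · rw [h, nakadaT, if_pos rfl]; constructor <;> linarith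
    · exact nakadaT_mem h

lemma unionN_subset {α : ℝ} (h0 : 0 < α) (hg : α ^ 2 + α ≤ 1) :
    unionN α ⊆ Ico (α - 1) α ×ˢ Icc 0 1 := by
  intro p hp
  obtain ⟨w, hw, ⟨x, hx, hxp⟩, ⟨y, hy, hyp⟩⟩ := mem_iUnion₂.1 hp
  have hy1 : y ∈ Icc (0 : ℝ) 1 := ⟨hy.1, hy.2.trans (inv_dN_self_mem h0 hg)⟩
  obtain ⟨b1, b2, b3⟩ := NmatW_bounds h0 hg hy1 w hw.2
  refine ⟨?_, ?_⟩
  · rw [← hxp]; exact nakadaT_iter_mem h0 (lt_one_of h0 hg) hx.1 _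
  · rw [← hyp]; exact ⟨div_nonneg b1 b3.le, (div_le_one b3).2 b2⟩

lemma mem_cylW_append {α x : ℝ} {w : List (ℤ × ℤ)} {a : ℤ × ℤ} :
    x ∈ cylW α (w ++ [a]) ↔ x ∈ cylW α w ∧ (nakadaT α)^[w.length] x ≠ 0 ∧
      (epsN ((nakadaT α)^[w.length] x), dN α ((nakadaT α)^[w.length] x)) = a := by
  constructor
  · rintro ⟨hx, h⟩
    refine ⟨⟨hx, fun i hi => ?_⟩, ?_⟩
    · have := h i (by simp; omega)
      rwa [List.getD_append _ _ _ _ hi] at this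
    · have := h w.length (by simp)
      rwa [List.getD_append_right _ _ _ _ le_rfl, Nat.sub_self] at this
  · rintro ⟨⟨hx, h⟩, h2⟩
    refine ⟨hx, fun i hi => ?_⟩
    rcases Nat.lt_succ_iff_lt_or_eq.1 (by simpa using hi : i < w.length + 1) with h3 | rfl
    · rw [List.getD_append _ _ _ _ h3]; exact h i h3
    · rw [List.getD_append_right _ _ _ _ le_rfl, Nat.sub_self]; exact h2

/-- The union is stable under the branches of `𝒯_α` with digit in the alphabet. -/
lemma nakPlanar_mem_unionN_of_letter {α x y : ℝ} (h0 : 0 < α) (hg : α ^ 2 + α ≤ 1)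
    (h : (x, y) ∈ unionN α) (hx : x ≠ 0) (ha : (epsN x, dN α x) ∈ calA α) :
    nakPlanar α (x, y) ∈ unionN α := by
  obtain ⟨w, hw, ⟨x0, hx0, rfl⟩, ⟨y0, hy0, rfl⟩⟩ := mem_iUnion₂.1 h
  have hy1 : y0 ∈ Icc (0 : ℝ) 1 := ⟨hy0.1, hy0.2.trans (inv_dN_self_mem h0 hg)⟩
  have hc : x0 ∈ cylW α (w ++ [(epsN ((nakadaT α)^[w.length] x0),
      dN α ((nakadaT α)^[w.length] x0))]) := mem_cylW_append.2 ⟨hx0, hx, rfl⟩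
  refine mem_iUnion₂.2 ⟨_, ⟨⟨x0, hc⟩, ?_⟩, ⟨x0, hc, ?_⟩, ⟨y0, hy0, ?_⟩⟩
  · intro a ha'
    rcases List.mem_append.1 ha' with h' | h'
    · exact hw.2 a h'
    · rw [List.mem_singleton.1 h']; exact ha
  · rw [List.length_append, List.length_singleton, Function.iterate_succ_apply']; rfl
  · rw [NmatW_append, moeb_mul (NmatW_bounds h0 hg hy1 w hw.2).2.2.ne']; rfl

lemma unionN_cases {α x y : ℝ} (h0 : 0 < α) (hg : α ^ 2 + α ≤ 1) (h : (x, y) ∈ unionN α) :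
    (x ∈ Ico (α - 1) α ∧ y ∈ Icc (0 : ℝ) ((dN α α : ℝ) + 1)⁻¹) ∨
      ∃ x' y', (x', y') ∈ unionN α ∧ x' ≠ 0 ∧ (epsN x', dN α x') ∈ calA α ∧
        nakPlanar α (x', y') = (x, y) := by
  obtain ⟨w, hw, ⟨x0, hx0, hxe⟩, ⟨y0, hy0, hye⟩⟩ := mem_iUnion₂.1 h
  have hy1 : y0 ∈ Icc (0 : ℝ) 1 := ⟨hy0.1, hy0.2.trans (inv_dN_self_mem h0 hg)⟩
  rcases List.eq_nil_or_concat' w with rfl | ⟨v, a, rfl⟩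
  · left
    simp only [List.length_nil, Function.iterate_zero, id_eq] at hxe
    simp [moeb, NmatW] at hye
    exact ⟨hxe ▸ hx0.1, hye ▸ hy0⟩
  · right
    obtain ⟨hv, hne, hae⟩ := mem_cylW_append.1 hx0
    have hvA : ∀ b ∈ v, b ∈ calA α := fun b hb => hw.2 b (by simp [hb])
    refine ⟨(nakadaT α)^[v.length] x0, moeb (NmatW v) y0, ?_, hne, ?_, ?_⟩
    · exact mem_iUnion₂.2 ⟨v, ⟨⟨x0, hv⟩, hvA⟩, ⟨x0, hv, rfl⟩, ⟨y0, hy0, rfl⟩⟩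
    · rw [hae]; exact hw.2 a (by simp)
    · rw [List.length_append, List.length_singleton, Function.iterate_succ_apply'] at hxe
      rw [NmatW_append, moeb_mul (NmatW_bounds h0 hg hy1 v hvA).2.2.ne'] at hye
      rw [nakPlanar, hae]
      exact Prod.ext hxe hye

/-- The union is forward invariant under `𝒯_α`, away from the line `x = 0`: the digits outside
the alphabet land in the rectangle of the empty word. -/
lemma nakPlanar_mem_unionN {α : ℝ} (h0 : 0 < α) (hg : α ^ 2 + α ≤ 1) {p : ℝ × ℝ}
    (h : p ∈ unionN α) (hx : p.1 ≠ 0) : nakPlanar α p ∈ unionN α := by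
  obtain ⟨x, y⟩ := p
  obtain ⟨hxm, hym⟩ := unionN_subset h0 hg h
  obtain ⟨h1, h2 | h2⟩ := digit_facts h0 hg hxm hx hym
  · exact nakPlanar_mem_unionN_of_letter h0 hg h hx h2
  · rw [nakPlanar_eq]
    have hd : (2 : ℝ) ≤ dN α α := by exact_mod_cast two_le_dN_self h0 hg
    refine base_mem_unionN (nakadaT_mem hx) ⟨by positivity, ?_⟩
    rw [← one_div]
    exact one_div_le_one_div_of_le (by linarith) h2

/-- Appending a letter `(ε, n)` of the alphabet, in terms of the endpoint of the branch. -/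
lemma letter_mem_unionN {α z v : ℝ} {ε n : ℤ} (h0 : 0 < α) (hg : α ^ 2 + α ≤ 1)
    (hz : z ∈ Ico (α - 1) α) (hn : 0 < n + z) (ha : (ε, n) ∈ calA α)
    (h : ((ε : ℝ) / (n + z), v) ∈ unionN α) : (z, 1 / (ε * v + n)) ∈ unionN α := by
  have hε : ε = 1 ∨ ε = -1 := by
    rcases ha with ⟨h, -⟩ | h
    · exact Or.inr h
    · exact Or.inl (congrArg Prod.fst h)
  obtain ⟨h1, h2, h3⟩ := branchN hε hz hn
  have hε0 : (ε : ℝ) ≠ 0 := by rcases hε with h | h <;> rw [h] <;> norm_num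
  have := nakPlanar_mem_unionN_of_letter h0 hg h (div_ne_zero hε0 hn.ne') (by rw [h2, h3]; exact ha)
  rwa [nakPlanar_branch hε hz hn] at this

/-! ### The covering property -/

/-- A run of letters `(-1, 2)`: conjugating by `z = 1 / ρ - 1` and `v = 1 - 1 / σ`, each such
letter shifts `ρ` down and `σ` up by one. -/
lemma chain_mem_unionN {α ρ : ℝ} (h0 : 0 < α) (hg : α ^ 2 + α ≤ 1) (K : ℕ) (hρ : 0 < ρ)
    (hρ1 : 1 < ρ * (1 + α)) (hK : α * (ρ + K) ≤ 1) {σ : ℝ} (hσ : 0 < σ)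
    (h : (1 / (ρ + K) - 1, 1 - 1 / σ) ∈ unionN α) :
    (1 / ρ - 1, 1 - 1 / (σ + K)) ∈ unionN α := by
  induction K generalizing σ with
  | zero => simpa using h
  | succ K ih =>
    have hKn : (0 : ℝ) ≤ K := Nat.cast_nonneg K
    push_cast at hK h ⊢
    have hτ : 0 < ρ + K := by linarith
    have key : (1 / (ρ + K) - 1, 1 - 1 / (σ + 1)) ∈ unionN α := by
      have hz : 1 / (ρ + K) - 1 ∈ Ico (α - 1) α := by
        constructor
        · have : α ≤ 1 / (ρ + K) := by rw [le_div_iff₀ hτ]; nlinarith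
          linarith
        · have : 1 / (ρ + K) < 1 + α := by rw [div_lt_iff₀ hτ]; nlinarith
          linarith
      have hpos : 0 < 1 / (ρ + K) := by positivity
      have hd := two_le_dN_self h0 hg
      have := letter_mem_unionN (v := 1 - 1 / σ) (ε := -1) (n := 2) h0 hg hz
        (by push_cast; linarith) (Or.inl ⟨rfl, le_rfl, by linarith⟩)
        (by
          convert h using 2
          have hτ1 : ρ + (K + 1) ≠ 0 := by linarith
          push_cast
          rw [show 2 + (1 / (ρ + K) - 1) = (ρ + (K + 1)) / (ρ + K) by field_simp; ring]
          field_simp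
          ring)
      convert this using 2
      have hσ1 : σ + 1 ≠ 0 := by linarith
      push_cast
      rw [show -1 * (1 - 1 / σ) + 2 = (σ + 1) / σ by field_simp; ring, one_div_div]
      field_simp
      ring
    have := ih (by nlinarith) (by linarith : 0 < σ + 1) key
    convert this using 3
    ring

/-- For each rational height `p / q`, one of two dual points lies in the union. The first
alternative concerns the involution `(x, y) ↦ (1 / (1 + x) - 1, 1 - y)`, which is `(-x / (1 + x),
1 - y)`; the second takes over when the continued fraction expansion of the height leads to an
abscissa `X ≥ α`, outside the domain of `T_α`. The two feed each other along the Euclidean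
algorithm. -/
lemma cover_rat {α : ℝ} (h0 : 0 < α) (hg : α ^ 2 + α ≤ 1) (q : ℕ) : 0 < q →
    (∀ x : ℝ, 1 < (1 + x) * (1 + α) → x < α → ∀ p : ℕ, p ≤ q →
      ((x, (p : ℝ) / q) ∈ unionN α ∨ (1 / (1 + x) - 1, 1 - (p : ℝ) / q) ∈ unionN α)) ∧
    (∀ x : ℝ, α ≤ x → x * (1 + α) ≤ 1 → ∀ p : ℕ, p ≤ q →
      ((1 / (1 + x) - 1, 1 - (p : ℝ) / q) ∈ unionN α ∨
        (x - 1, 1 - 1 / (1 + (p : ℝ) / q)) ∈ unionN α)) := by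
  induction q using Nat.strong_induction_on with
  | _ q ih =>
  intro hq
  have h1 := lt_one_of h0 hg
  have hd := two_le_dN_self h0 hg
  have hdR : (2 : ℝ) ≤ dN α α := by exact_mod_cast hd
  obtain ⟨hd1, hd2⟩ := dN_self h0
  have hinv := inv_ge h0 hg
  have hqR : (0 : ℝ) < q := by exact_mod_cast hq
  -- one step of the Euclidean algorithm: `p / q = 1 / (b + s)` with `s = r / p`
  have euclid : ∀ p : ℕ, 0 < p → p ≤ q → ∃ b r : ℕ, 1 ≤ b ∧ r ≤ p ∧ q = b * p + r ∧ r < p ∧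
      (p : ℝ) / q = 1 / (b + (r : ℝ) / p) := by
    intro p hp hpq
    have e : q = q / p * p + q % p := by rw [mul_comm]; exact (Nat.div_add_mod q p).symm
    have hpR : (0 : ℝ) < p := by exact_mod_cast hp
    refine ⟨q / p, q % p, (Nat.one_le_div_iff hp).2 hpq, (Nat.mod_lt _ hp).le, e,
      Nat.mod_lt _ hp, ?_⟩
    have e' : (q : ℝ) = (q / p : ℕ) * p + (q % p : ℕ) := by exact_mod_cast e
    have : ((q / p : ℕ) : ℝ) + ((q % p : ℕ) : ℝ) / p = q / p := by
      rw [e']; field_simp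
    rw [this, one_div_div]
  have half : ∀ x : ℝ, 1 < (1 + x) * (1 + α) → x < α → ∀ p : ℕ, 2 * p ≤ q →
      ((x, (p : ℝ) / q) ∈ unionN α ∨ (1 / (1 + x) - 1, 1 - (p : ℝ) / q) ∈ unionN α) := by
    intro x hx1 hx2 p hp
    have hxp : 0 < 1 + x := by nlinarith
    have hxJ : x ∈ Ico (α - 1) α := ⟨by nlinarith, hx2⟩
    rcases Nat.eq_zero_or_pos p with rfl | hp0
    · left
      exact base_mem_unionN hxJ ⟨by simp, by simp; positivity⟩
    obtain ⟨m, r, hm1, hrp, hqe, hrp', hy⟩ := euclid p hp0 (by omega)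
    have hm : 2 ≤ m := by
      by_contra hlt
      have : m = 1 := by omega
      subst this; omega
    have hpR : (0 : ℝ) < p := by exact_mod_cast hp0
    have hmR : (2 : ℝ) ≤ m := by exact_mod_cast hm
    have ht0 : (0 : ℝ) ≤ (r : ℝ) / p := by positivity
    obtain ⟨ih1, ih2⟩ := ih p (by omega) hp0
    rw [hy]
    set t : ℝ := (r : ℝ) / p with ht
    rcases le_or_gt ((dN α α : ℝ) + 1) m with hmd | hmd
    · left
      refine base_mem_unionN hxJ ⟨by positivity, ?_⟩
      rw [← one_div]
      exact one_div_le_one_div_of_le (by linarith) (by linarith)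
    have hmd' : (m : ℤ) ≤ dN α α := by
      have : (m : ℤ) < dN α α + 1 := by exact_mod_cast hmd
      omega
    have hmx : 0 < (m : ℝ) + x := by linarith
    -- the dual point of `1 / (m + x)` lies on the branch of the letter `(-1, m + 1)`
    have hneg : (1 / (1 + 1 / ((m : ℝ) + x)) - 1, 1 - t) ∈ unionN α →
        (x, 1 / ((m : ℝ) + t)) ∈ unionN α := by
      intro h
      have := letter_mem_unionN (v := 1 - t) (ε := -1) (n := m + 1) h0 hg hxJ
        (by push_cast; linarith) (Or.inl ⟨rfl, by linarith [(by exact_mod_cast hm : (2 : ℤ) ≤ m)],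
          by linarith⟩)
        (by
          convert h using 2
          push_cast
          have : (m : ℝ) + 1 + x ≠ 0 := by linarith
          have : (m : ℝ) + x + 1 ≠ 0 := by linarith
          field_simp
          ring)
      convert this using 3
      push_cast; ring
    rcases lt_or_ge (1 / ((m : ℝ) + x)) α with hX | hX
    · have hmd2 : (m : ℤ) = dN α α := by
        rw [div_lt_iff₀ hmx] at hX
        have h3 : 1 / α < m + x := by rw [div_lt_iff₀ h0]; linarith
        have h4 : (dN α α : ℝ) < m + 1 := by linarith
        have : dN α α < (m : ℤ) + 1 := by exact_mod_cast h4
        omega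
      have hX0 : 0 < 1 / ((m : ℝ) + x) := by positivity
      rcases ih1 (1 / (m + x)) (by nlinarith) hX r hrp with h | h
      · left
        have := letter_mem_unionN (v := t) (ε := 1) (n := m) h0 hg hxJ (by exact_mod_cast hmx)
          (Or.inr (by rw [hmd2])) (by simpa using h)
        convert this using 3
        push_cast; ring
      · exact Or.inl (hneg h)
    · have hX' : 1 / ((m : ℝ) + x) * (1 + α) ≤ 1 := by
        rw [one_div_mul_eq_div, div_le_one hmx]; nlinarith
      rcases ih2 (1 / (m + x)) hX hX' r hrp with h | h
      · exact Or.inl (hneg h)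
      · right
        have hc : ((m - 1 : ℕ) : ℝ) = m - 1 := by rw [Nat.cast_sub hm1]; simp
        rw [le_div_iff₀ hmx] at hX
        have := chain_mem_unionN (σ := 1 + t) h0 hg (m - 1) hxp hx1
          (by rw [hc]; linarith) (by linarith)
          (by rw [hc]; convert h using 4; ring)
        rw [hc] at this
        convert this using 4
        ring
  refine ⟨fun x hx1 hx2 p hp => ?_, fun x hx1 hx2 p hp => ?_⟩
  · rcases le_or_gt (2 * p) q with h2 | h2
    · exact half x hx1 hx2 p h2
    · -- heights above `1 / 2` reduce to the others through the involution
      have hxp : 0 < 1 + x := by nlinarith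
      have hc : ((q - p : ℕ) : ℝ) / q = 1 - (p : ℝ) / q := by
        rw [Nat.cast_sub hp]; field_simp
      have hi : 1 / (1 + (1 / (1 + x) - 1)) - 1 = x := by
        rw [add_sub_cancel, one_div_one_div]; ring
      have := half (1 / (1 + x) - 1)
        (by
          rw [add_sub_cancel, one_div_mul_eq_div, lt_div_iff₀ hxp]; linarith)
        (by
          have : 1 / (1 + x) < 1 + α := by rw [div_lt_iff₀ hxp]; linarith
          linarith) (q - p) (by omega)
      rw [hc, hi, sub_sub_cancel] at this
      exact this.symm
  · have hx0 : 0 < x := h0.trans_le hx1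
    have hx1' : x < 1 := by nlinarith
    have hxJ : x - 1 ∈ Ico (α - 1) α := ⟨by linarith, by linarith⟩
    rcases Nat.eq_zero_or_pos p with rfl | hp0
    · right
      exact base_mem_unionN hxJ ⟨by simp, by simp; positivity⟩
    rcases hp.eq_or_lt with rfl | hpq
    · left
      rw [div_self hqR.ne', sub_self]
      refine base_mem_unionN ⟨?_, ?_⟩ ⟨le_rfl, by positivity⟩
      · have : α ≤ 1 / (1 + x) := by
          rw [le_div_iff₀ (by linarith)]; nlinarith
        linarith
      · have : 1 / (1 + x) < 1 := by
          rw [div_lt_one (by linarith)]; linarith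
        linarith
    obtain ⟨b, r, hb1, hrp, hqe, hrp', hy⟩ := euclid p hp0 hp
    have hpR : (0 : ℝ) < p := by exact_mod_cast hp0
    have hbR : (1 : ℝ) ≤ b := by exact_mod_cast hb1
    have hs0 : (0 : ℝ) ≤ (r : ℝ) / p := by positivity
    obtain ⟨ih1, ih2⟩ := ih p hpq hp0
    rw [hy]
    set s : ℝ := (r : ℝ) / p with hs
    have hbs : (b : ℝ) + s ≠ 0 := by linarith
    have hbs1 : (b : ℝ) + s + 1 ≠ 0 := by linarith
    have e1 : 1 - 1 / (1 + 1 / ((b : ℝ) + s)) = 1 / (b + 1 + s) := by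
      have : (b : ℝ) + 1 + s ≠ 0 := by linarith
      field_simp
      ring
    rw [e1]
    rcases le_or_gt (dN α α) (b : ℤ) with hbd | hbd
    · right
      have : (dN α α : ℝ) ≤ b := by exact_mod_cast hbd
      refine base_mem_unionN hxJ ⟨by positivity, ?_⟩
      rw [← one_div]
      exact one_div_le_one_div_of_le (by linarith) (by linarith)
    have hbx : 0 < (b : ℝ) + x := by linarith
    have hneg : (1 / (1 + 1 / ((b : ℝ) + x)) - 1, 1 - s) ∈ unionN α →
        (x - 1, 1 / ((b : ℝ) + 1 + s)) ∈ unionN α := by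
      intro h
      have := letter_mem_unionN (v := 1 - s) (ε := -1) (n := b + 2) h0 hg hxJ
        (by push_cast; linarith) (Or.inl ⟨rfl, by linarith [(by exact_mod_cast hb1 : (1 : ℤ) ≤ b)],
          by simp only; omega⟩)
        (by
          convert h using 2
          push_cast
          have h5 : (b : ℝ) + x + 1 ≠ 0 := by linarith
          rw [show (b : ℝ) + 2 + (x - 1) = b + x + 1 by ring]
          field_simp
          ring)
      convert this using 3
      push_cast; ring
    rcases lt_or_ge (1 / ((b : ℝ) + x)) α with hX | hX
    · have hbd2 : (b : ℤ) + 1 = dN α α := by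
        rw [div_lt_iff₀ hbx] at hX
        have h3 : 1 / α < b + x := by rw [div_lt_iff₀ h0]; linarith
        have h4 : (dN α α : ℝ) < b + 2 := by linarith
        have : dN α α < (b : ℤ) + 2 := by exact_mod_cast h4
        omega
      have hX0 : 0 < 1 / ((b : ℝ) + x) := by positivity
      rcases ih1 (1 / (b + x)) (by nlinarith) hX r hrp with h | h
      · right
        have := letter_mem_unionN (v := s) (ε := 1) (n := b + 1) h0 hg hxJ
          (by push_cast; linarith) (Or.inr (by rw [hbd2]))
          (by
            convert h using 2
            push_cast; congr 1; ring)
        convert this using 3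
        push_cast; ring
      · exact Or.inr (hneg h)
    · have hX' : 1 / ((b : ℝ) + x) * (1 + α) ≤ 1 := by
        rw [one_div_mul_eq_div, div_le_one hbx]; linarith
      rcases ih2 (1 / (b + x)) hX hX' r hrp with h | h
      · exact Or.inr (hneg h)
      · left
        have hc : ((b - 1 : ℕ) : ℝ) = b - 1 := by rw [Nat.cast_sub hb1]; simp
        rw [le_div_iff₀ hbx] at hX
        have := chain_mem_unionN (σ := 1 + s) h0 hg (b - 1) (by linarith : 0 < 1 + x)
          (by nlinarith) (by rw [hc]; linarith) (by linarith)
          (by rw [hc]; convert h using 4; ring)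
        rw [hc] at this
        convert this using 3
        ring

/-- The covering property for all heights: for `x` in the domain of the involution, `y` lies in
the fibre of `Λ_α` over `x` or `1 - y` lies in the fibre over `-x / (1 + x)`. -/
lemma cover_real {α x y : ℝ} (h0 : 0 < α) (hg : α ^ 2 + α ≤ 1) (hx1 : 1 < (1 + x) * (1 + α))
    (hx2 : x < α) (hy : y ∈ Icc (0 : ℝ) 1) :
    (x, y) ∈ LambdaN α ∨ (1 / (1 + x) - 1, 1 - y) ∈ LambdaN α := by
  have hc : IsClosed {v : ℝ | (x, v) ∈ LambdaN α ∨ (1 / (1 + x) - 1, 1 - v) ∈ LambdaN α} := by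
    have hcl : IsClosed (LambdaN α) := isClosed_closure
    exact (hcl.preimage (by fun_prop : Continuous fun v : ℝ => (x, v))).union
      (hcl.preimage (by fun_prop : Continuous fun v : ℝ => (1 / (1 + x) - 1, 1 - v)))
  have ht := (tendsto_nat_floor_mul_div_atTop hy.1).comp
    (tendsto_natCast_atTop_atTop (R := ℝ))
  refine hc.mem_of_tendsto ht ?_
  filter_upwards [Filter.eventually_gt_atTop 0] with n hn
  have hle : ⌊y * n⌋₊ ≤ n := by
    apply Nat.floor_le_of_le
    have : (0 : ℝ) ≤ n := Nat.cast_nonneg n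
    nlinarith [hy.2]
  exact ((cover_rat h0 hg n hn).1 x hx1 hx2 _ hle).imp
    (fun h => subset_closure h) (fun h => subset_closure h)

/-! ### Invariance of the region up to null sets -/

/-- The countable field `ℚ(α)`. Abscissas in it comprise all endpoints of cylinders and all points
with a finite expansion, and both `T_α` and its inverse branches preserve its complement. -/
def fieldN (α : ℝ) : Subfield ℝ := Subfield.closure {α}

lemma self_mem_fieldN (α : ℝ) : α ∈ fieldN α := Subfield.subset_closure rfl

lemma countable_fieldN (α : ℝ) : (fieldN α : Set ℝ).Countable := by
  rw [← Cardinal.le_aleph0_iff_set_countable]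
  refine (Subfield.cardinalMk_closure_le_max {α}).trans ?_
  simp

/-- The part of `Λ_α` lying over abscissas outside `ℚ(α)`. -/
def genN (α : ℝ) : Set (ℝ × ℝ) := LambdaN α ∩ {p | p.1 ∉ fieldN α}

/-- The formula for `𝒯_α` on the cylinder of the digit `(ε, n)`. -/
def planarBranch (ε n : ℤ) (p : ℝ × ℝ) : ℝ × ℝ := (ε / p.1 - n, 1 / (ε * p.2 + n))

lemma ne_zero_of_notMem {α x : ℝ} (hx : x ∉ fieldN α) : x ≠ 0 := by
  rintro rfl; exact hx (zero_mem _)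

lemma nakPlanar_eq_planarBranch {α : ℝ} {p : ℝ × ℝ} (hp : p.1 ≠ 0) :
    nakPlanar α p = planarBranch (epsN p.1) (dN α p.1) p := by
  obtain ⟨x, y⟩ := p
  rw [nakPlanar_eq, nakadaT_of_ne hp, abs_one_div_eq hp]; rfl

lemma nakadaT_notMem {α x : ℝ} (hx : x ∉ fieldN α) : nakadaT α x ∉ fieldN α := by
  intro h
  apply hx
  rw [eq_branch (α := α) (ne_zero_of_notMem hx)]
  exact div_mem (intCast_mem _ _) (add_mem (intCast_mem _ _) h)

lemma LambdaN_subset {α : ℝ} (h0 : 0 < α) (hg : α ^ 2 + α ≤ 1) :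
    LambdaN α ⊆ Icc (α - 1) α ×ˢ Icc 0 1 :=
  closure_minimal ((unionN_subset h0 hg).trans (prod_mono Ico_subset_Icc_self le_rfl))
    (isClosed_Icc.prod isClosed_Icc)

lemma genN_bounds {α : ℝ} (h0 : 0 < α) (hg : α ^ 2 + α ≤ 1) {p : ℝ × ℝ} (hp : p ∈ LambdaN α)
    (hx : p.1 ∉ fieldN α) : p.1 ∈ Ico (α - 1) α ∧ p.2 ∈ Icc (0 : ℝ) 1 := by
  obtain ⟨h1, h2⟩ := LambdaN_subset h0 hg hp
  refine ⟨⟨h1.1, lt_of_le_of_ne h1.2 ?_⟩, h2⟩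
  intro h
  exact hx (h ▸ self_mem_fieldN α)

lemma digit_eventually_eq {α x : ℝ} (hx : x ∉ fieldN α) :
    ∀ᶠ x' in nhds x, x' ≠ 0 ∧ epsN x' = epsN x ∧ dN α x' = dN α x := by
  have hx0 := ne_zero_of_notMem hx
  have hc : ContinuousAt (fun x' : ℝ => |1 / x'| + 1 - α) x := by
    have : ContinuousAt (fun x' : ℝ => 1 / x') x := continuousAt_const.div continuousAt_id hx0
    exact (this.abs.add continuousAt_const).sub continuousAt_const
  have hT := nakadaT_notMem hx
  have hlt : (dN α x : ℝ) < |1 / x| + 1 - α := by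
    refine lt_of_le_of_ne (Int.floor_le _) fun h => hT ?_
    rw [nakadaT_of_ne hx0, show |1 / x| - (dN α x : ℝ) = α - 1 by linarith]
    exact sub_mem (self_mem_fieldN α) (one_mem _)
  have hlt2 : |1 / x| + 1 - α < dN α x + 1 := Int.lt_floor_add_one _
  have hs : ∀ᶠ x' in nhds x, x' ≠ 0 ∧ epsN x' = epsN x := by
    rcases lt_or_gt_of_ne hx0 with h | h
    · filter_upwards [eventually_lt_nhds h] with x' h'
      exact ⟨h'.ne, by rw [epsN, epsN, if_neg h'.not_gt, if_neg h.not_gt]⟩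
    · filter_upwards [eventually_gt_nhds h] with x' h'
      exact ⟨h'.ne', by rw [epsN, epsN, if_pos h', if_pos h]⟩
  filter_upwards [hs, hc.eventually_const_lt hlt, hc.eventually_lt_const hlt2] with x' h1 h2 h3
  exact ⟨h1.1, h1.2, Int.floor_eq_iff.2 ⟨h2.le, h3⟩⟩

lemma nakPlanar_mem_genN {α : ℝ} (h0 : 0 < α) (hg : α ^ 2 + α ≤ 1) {p : ℝ × ℝ}
    (hp : p ∈ genN α) : nakPlanar α p ∈ genN α := by
  obtain ⟨hpΛ, hx⟩ := hp
  have hx' : p.1 ∉ fieldN α := hx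
  have hx0 := ne_zero_of_notMem hx'
  obtain ⟨hxJ, hy⟩ := genN_bounds h0 hg hpΛ hx'
  refine ⟨?_, nakadaT_notMem hx'⟩
  have hev : ∀ᶠ q : ℝ × ℝ in nhds p,
      q.1 ≠ 0 ∧ epsN q.1 = epsN p.1 ∧ dN α q.1 = dN α p.1 :=
    continuousAt_fst.eventually (digit_eventually_eq hx')
  have hb : ContinuousAt (planarBranch (epsN p.1) (dN α p.1)) p := by
    have hden := (digit_facts h0 hg hxJ hx0 hy).1
    refine ContinuousAt.prodMk ?_ ?_
    · exact (continuousAt_const.div continuousAt_fst hx0).sub continuousAt_const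
    · exact continuousAt_const.div
        ((continuousAt_const.mul continuousAt_snd).add continuousAt_const) (by linarith)
  have hc : ContinuousAt (nakPlanar α) p := by
    refine hb.congr ?_
    filter_upwards [hev] with q hq
    rw [nakPlanar_eq_planarBranch hq.1, hq.2.1, hq.2.2]
  have hf : ∃ᶠ q in nhds p, q ∈ unionN α := mem_closure_iff_frequently.1 hpΛ
  refine mem_closure_iff_frequently.2 (hc.frequently ?_)
  exact (hf.and_eventually hev).mono fun q hq => nakPlanar_mem_unionN h0 hg hq.1 hq.2.1

lemma finite_calA (α : ℝ) : (calA α).Finite := by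
  refine ((Set.finite_Icc (-1 : ℤ) 1).prod
    ((Set.finite_Icc (2 : ℤ) (dN α α + 1)).union (Set.finite_singleton (dN α α)))).subset ?_
  rintro ⟨e, n⟩ (⟨h1, h2, h3⟩ | h)
  · simp only at h1 h2 h3
    subst h1
    exact ⟨by simp, Or.inl ⟨h2, h3⟩⟩
  · rw [Prod.mk.injEq] at h
    obtain ⟨rfl, rfl⟩ := h
    exact ⟨by simp, Or.inr rfl⟩

/-- The inverse of `planarBranch ε n`. -/
def planarInv (a : ℤ × ℤ) (p : ℝ × ℝ) : ℝ × ℝ := (a.1 / (a.2 + p.1), a.1 * (1 / p.2 - a.2))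

/-- Every point of the region with generic abscissa has a preimage there, except on `y = 0`. Points
that are limits of images under one of the finitely many letters have one by continuity of its inverse;
for the remaining ones, in the rectangle of the empty word, the covering property provides it. -/
lemma exists_preimage_genN {α : ℝ} (h0 : 0 < α) (hg : α ^ 2 + α ≤ 1) {p : ℝ × ℝ}
    (hp : p ∈ genN α) (hy0 : p.2 ≠ 0) : p ∈ nakPlanar α '' genN α := by
  obtain ⟨hpΛ, hx⟩ := hp
  have hx' : p.1 ∉ fieldN α := hx
  have hx0 := ne_zero_of_notMem hx'
  obtain ⟨hxJ, hy⟩ := genN_bounds h0 hg hpΛ hx'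
  have hd : (2 : ℝ) ≤ dN α α := by exact_mod_cast two_le_dN_self h0 hg
  have hden : ∀ n : ℤ, (n : ℝ) + p.1 ≠ 0 := fun n h => hx' (by
    rw [show p.1 = -(n : ℝ) by linarith]
    exact neg_mem (intCast_mem _ _))
  have hsplit : unionN α ⊆ (Icc (α - 1) α ×ˢ Icc (0 : ℝ) ((dN α α : ℝ) + 1)⁻¹) ∪
      ⋃ a ∈ calA α, planarInv a ⁻¹' unionN α := by
    rintro ⟨x, y⟩ h
    rcases unionN_cases h0 hg h with ⟨h1, h2⟩ | ⟨x', y', h1, h2, h3, h4⟩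
    · exact Or.inl ⟨⟨h1.1, h1.2.le⟩, h2⟩
    · right
      refine mem_iUnion₂.2 ⟨_, h3, ?_⟩
      rw [nakPlanar_eq, Prod.mk.injEq] at h4
      obtain ⟨rfl, rfl⟩ := h4
      have he : (epsN x' : ℝ) * epsN x' = 1 := by
        rcases epsN_cases x' with h | h <;> rw [h] <;> norm_num
      have : planarInv (epsN x', dN α x')
          (nakadaT α x', 1 / (epsN x' * y' + dN α x')) = (x', y') := by
        refine Prod.ext (eq_branch h2).symm ?_
        simp only [planarInv, one_div_one_div, add_sub_cancel_right, ← mul_assoc, he, one_mul]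
      rw [mem_preimage, this]; exact h1
  have hcl := closure_mono hsplit hpΛ
  rw [closure_union, (finite_calA α).closure_biUnion,
    (isClosed_Icc.prod isClosed_Icc).closure_eq] at hcl
  rcases hcl with h | h
  · have hypos : 0 < p.2 := lt_of_le_of_ne hy.1 hy0.symm
    have hyd : (dN α α : ℝ) + 1 ≤ 1 / p.2 := by
      rw [one_div]; exact (le_inv_comm₀ hypos (by linarith)).1 h.2.2
    obtain ⟨hd1, hd2⟩ := dN_self h0
    set n : ℤ := ⌊1 / p.2⌋ with hn
    set t : ℝ := 1 / p.2 - n with ht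
    have ht0 : 0 ≤ t := by linarith [Int.floor_le (1 / p.2)]
    have ht1 : t ≤ 1 := by linarith [Int.lt_floor_add_one (1 / p.2)]
    have hnd : dN α α + 1 ≤ n := Int.le_floor.2 (by push_cast; exact hyd)
    have hnR : (dN α α : ℝ) + 1 ≤ n := by exact_mod_cast hnd
    have hpos : 0 < (n : ℝ) + p.1 := by linarith [hxJ.1]
    have hXpos : 0 < 1 / ((n : ℝ) + p.1) := by positivity
    have hX : 1 / ((n : ℝ) + p.1) < α := by
      rw [div_lt_iff₀ hpos]
      have h3 : 1 / α < n + p.1 := by linarith [hxJ.1]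
      rw [div_lt_iff₀ h0] at h3
      linarith
    rcases cover_real h0 hg (by nlinarith) hX ⟨ht0, ht1⟩ with h | h
    · refine ⟨(1 / (n + p.1), t), ⟨h, fun hF => hx' ?_⟩, ?_⟩
      · have h5 := sub_mem (inv_mem hF) (intCast_mem (fieldN α) n)
        simpa using h5
      · have := nakPlanar_branch (y := t) (ε := 1) (n := n) (Or.inl rfl) hxJ hpos
        simp only [Int.cast_one, one_mul] at this
        rw [this, ht, sub_add_cancel, one_div_one_div]
    · have e : 1 / (1 + 1 / ((n : ℝ) + p.1)) - 1 = (-1 : ℤ) / ((n + 1 : ℤ) + p.1) := by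
        have h6 : (n : ℝ) + 1 + p.1 ≠ 0 := by linarith
        have h7 : (n : ℝ) + p.1 + 1 ≠ 0 := by linarith
        push_cast
        field_simp
        ring
      rw [e] at h
      refine ⟨_, ⟨h, fun hF => hx' ?_⟩, ?_⟩
      · have h5 := sub_mem (neg_mem (inv_mem hF)) (intCast_mem (fieldN α) (n + 1))
        simpa [div_eq_mul_inv] using h5
      · rw [nakPlanar_branch (Or.inr rfl) hxJ (by push_cast; linarith)]
        refine Prod.ext rfl ?_
        push_cast
        rw [show -1 * (1 - t) + ((n : ℝ) + 1) = 1 / p.2 by rw [ht]; ring, one_div_one_div]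
  · obtain ⟨a, ha, hpa⟩ := mem_iUnion₂.1 h
    obtain ⟨hε, hn2⟩ : (a.1 = 1 ∨ a.1 = -1) ∧ 2 ≤ a.2 := by
      rcases ha with ⟨h1, h2, -⟩ | h1
      · exact ⟨Or.inr h1, h2⟩
      · rw [h1]; exact ⟨Or.inl rfl, two_le_dN_self h0 hg⟩
    have hn2' : (2 : ℝ) ≤ a.2 := by exact_mod_cast hn2
    have hpos : 0 < (a.2 : ℝ) + p.1 := by linarith [hxJ.1]
    have hca : ContinuousAt (planarInv a) p := by
      refine ContinuousAt.prodMk ?_ ?_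
      · exact continuousAt_const.div (continuousAt_const.add continuousAt_fst) (hden _)
      · exact continuousAt_const.mul
          ((continuousAt_const.div continuousAt_snd hy0).sub continuousAt_const)
    have hmem : planarInv a p ∈ LambdaN α :=
      closure_mono (image_preimage_subset _ _) (hca.continuousWithinAt.mem_closure_image hpa)
    have he : (a.1 : ℝ) * a.1 = 1 := by
      rcases hε with h | h <;> rw [h] <;> norm_num
    have he0 : (a.1 : ℝ) ≠ 0 := fun h => by rw [h] at he; norm_num at he
    refine ⟨planarInv a p, ⟨hmem, fun hF => hx' ?_⟩, ?_⟩
    · have h5 := sub_mem (div_mem (intCast_mem (fieldN α) a.1) hF) (intCast_mem (fieldN α) a.2)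
      have e : (a.1 : ℝ) / (planarInv a p).1 - a.2 = p.1 := by
        simp only [planarInv]
        rw [div_div_cancel₀ he0]; ring
      rwa [e] at h5
    · rw [planarInv, nakPlanar_branch hε hxJ hpos]
      refine Prod.ext rfl ?_
      simp only [← mul_assoc, he, one_mul, sub_add_cancel, one_div_one_div]

/-! ### From equality of measures to bijectivity -/

/-- Let `T` be injective and measure-preserving on each of countably many disjoint pieces, map
their union `L` into itself, and cover `L` up to a null set. If `L` has finite measure, the images
of the pieces have total measure `μ L`, so they cannot overlap in positive measure, and `T` is a
bijection of `L` up to null sets. -/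
lemma bijOn_of_piecewise_measurePreserving {X ι : Type*} [MeasurableSpace X]
    [StandardBorelSpace X] [Countable ι] (μ : Measure X) {T : X → X} (hT : Measurable T)
    {P : ι → Set X} (hP : ∀ i, MeasurableSet (P i)) (hdisj : Pairwise (Function.onFun Disjoint P))
    (hinj : ∀ i, InjOn T (P i))
    (hμ : ∀ i A, MeasurableSet A → A ⊆ P i → μ (T '' A) = μ A)
    (hfin : μ (⋃ i, P i) ≠ ⊤) (hmaps : MapsTo T (⋃ i, P i) (⋃ i, P i))
    (hsurj : μ ((⋃ i, P i) \ T '' (⋃ i, P i)) = 0) :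
    ∃ L₁ L₂ : Set X, MeasurableSet L₁ ∧ MeasurableSet L₂ ∧ L₁ ⊆ ⋃ i, P i ∧ L₂ ⊆ ⋃ i, P i ∧
      μ ((⋃ i, P i) \ L₁) = 0 ∧ μ ((⋃ i, P i) \ L₂) = 0 ∧ BijOn T L₁ L₂ := by
  classical
  set L := ⋃ i, P i with hL
  have hLm : MeasurableSet L := MeasurableSet.iUnion hP
  have hQ : ∀ i, MeasurableSet (T '' P i) := fun i => (hP i).image_of_measurable_injOn hT (hinj i)
  have hTL : T '' L = ⋃ i, T '' P i := image_iUnion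
  have hsum : ∑' i, μ (T '' P i) = μ L := by
    rw [hL, measure_iUnion hdisj hP]
    exact tsum_congr fun i => hμ i _ (hP i) le_rfl
  have hover : ∀ a b, a ≠ b → μ (T '' P a ∩ T '' P b) = 0 := by
    intro a b hab
    -- the part of `T '' P a` inside `T '' P b` can be discarded without uncovering anything
    have hcov : L ⊆ (L \ T '' L) ∪ ((T '' P a \ T '' P b) ∪
        ⋃ i, if i = a then ∅ else T '' P i) := by
      intro x hx
      by_cases h1 : x ∈ T '' L
      · right
        rw [hTL] at h1
        by_cases h2 : x ∈ T '' P b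
        · exact Or.inr (mem_iUnion.2 ⟨b, by rw [if_neg hab.symm]; exact h2⟩)
        · obtain ⟨i, hi⟩ := mem_iUnion.1 h1
          by_cases h3 : i = a
          · exact Or.inl ⟨h3 ▸ hi, h2⟩
          · exact Or.inr (mem_iUnion.2 ⟨i, by rw [if_neg h3]; exact hi⟩)
      · exact Or.inl ⟨hx, h1⟩
    have hle : μ L ≤ μ (T '' P a \ T '' P b) + ∑' i, if i = a then 0 else μ (T '' P i) := by
      refine (measure_mono hcov).trans ((measure_union_le _ _).trans ?_)
      rw [hsurj, zero_add]
      refine (measure_union_le _ _).trans (add_le_add le_rfl ((measure_iUnion_le _).trans ?_))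
      refine ENNReal.tsum_le_tsum fun i => ?_
      split_ifs <;> simp
    have hsum2 := hsum
    rw [ENNReal.tsum_eq_add_tsum_ite a, ← measure_inter_add_sdiff (T '' P a) (hQ b),
      add_assoc] at hsum2
    have h3 : μ (T '' P a ∩ T '' P b) + μ L ≤ 0 + μ L := by
      rw [zero_add]
      calc _ ≤ _ := add_le_add le_rfl hle
        _ = μ L := hsum2
    exact le_antisymm ((ENNReal.add_le_add_iff_right hfin).1 h3) zero_le
  set W := ⋃ a, ⋃ b, if a = b then ∅ else T '' P a ∩ T '' P b with hW
  have hWm : MeasurableSet W := by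
    refine MeasurableSet.iUnion fun a => MeasurableSet.iUnion fun b => ?_
    split_ifs
    · exact MeasurableSet.empty
    · exact (hQ a).inter (hQ b)
  have hW0 : μ W = 0 := by
    refine measure_iUnion_null fun a => measure_iUnion_null fun b => ?_
    split_ifs with h
    · simp
    · exact hover a b h
  have hTLm : MeasurableSet (T '' L) := by rw [hTL]; exact MeasurableSet.iUnion hQ
  set L₂ := T '' L \ W with hL₂
  have hL₂m : MeasurableSet L₂ := hTLm.diff hWm
  refine ⟨L ∩ T ⁻¹' L₂, L₂, hLm.inter (hT hL₂m), hL₂m, inter_subset_left, ?_, ?_, ?_, ?_, ?_, ?_⟩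
  · rintro _ ⟨⟨x, hx, rfl⟩, -⟩; exact hmaps hx
  · -- a piece of the complement is carried by `T` into the null set `W`
    have hsub : L \ (L ∩ T ⁻¹' L₂) ⊆ ⋃ i, P i ∩ T ⁻¹' W := by
      rintro x ⟨hx, hx2⟩
      obtain ⟨i, hi⟩ := mem_iUnion.1 hx
      refine mem_iUnion.2 ⟨i, hi, ?_⟩
      by_contra hxW
      exact hx2 ⟨hx, ⟨x, hx, rfl⟩, hxW⟩
    refine measure_mono_null hsub (measure_iUnion_null fun i => ?_)
    rw [← hμ i _ ((hP i).inter (hT hWm)) inter_subset_left]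
    refine measure_mono_null ?_ hW0
    rintro _ ⟨x, hx, rfl⟩; exact hx.2
  · refine measure_mono_null (t := (L \ T '' L) ∪ W) ?_ ?_
    · rintro x ⟨hx, hx2⟩
      by_cases h : x ∈ T '' L
      · right; by_contra hxW; exact hx2 ⟨h, hxW⟩
      · exact Or.inl ⟨hx, h⟩
    · exact measure_union_null hsurj hW0
  · exact fun x hx => hx.2
  · rintro x ⟨hx, hx2⟩ y ⟨hy, -⟩ hxy
    obtain ⟨i, hi⟩ := mem_iUnion.1 hx
    obtain ⟨j, hj⟩ := mem_iUnion.1 hy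
    by_cases hij : i = j
    · subst hij; exact hinj i hi hj hxy
    · exfalso
      refine hx2.2 (mem_iUnion₂.2 ⟨i, j, ?_⟩)
      rw [if_neg hij]
      exact ⟨⟨x, hi, rfl⟩, ⟨y, hj, hxy.symm⟩⟩
  · rintro z hz
    obtain ⟨⟨x, hx, rfl⟩, -⟩ := id hz
    exact ⟨x, ⟨hx, hz⟩, rfl⟩

/-! ### Invariance of the measure -/

lemma planarBranch_injOn (ε n : ℤ) (hε : ε ≠ 0) :
    InjOn (planarBranch ε n) univ := by
  have hεR : (ε : ℝ) ≠ 0 := by exact_mod_cast hε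
  rintro ⟨x, y⟩ - ⟨x', y'⟩ - h
  simp only [planarBranch, Prod.mk.injEq, sub_left_inj, div_eq_mul_inv] at h
  rw [mul_right_inj' hεR] at h
  have h2 := h.2
  simp only [one_mul, inv_inj, add_left_inj] at h2
  exact Prod.ext (inv_injective h.1) (mul_left_cancel₀ hεR h2)

/-- Each branch of `𝒯_α` preserves the density `(1 + x y)⁻²`. -/
lemma muP_planarBranch_image {ε n : ℤ} (hε : ε = 1 ∨ ε = -1) {A : Set (ℝ × ℝ)}
    (hA : MeasurableSet A) (hAx : ∀ p ∈ A, p.1 ≠ 0 ∧ (ε : ℝ) * p.2 + n ≠ 0)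
    (hm : MeasurableSet (planarBranch ε n '' A)) :
    muP (planarBranch ε n '' A) = muP A := by
  have he : (ε : ℝ) ^ 2 = 1 := by rcases hε with h | h <;> rw [h] <;> norm_num
  have hε0 : ε ≠ 0 := by rcases hε with h | h <;> rw [h] <;> norm_num
  rw [muP, withDensity_apply _ hm, withDensity_apply _ hA]
  have hd : ∀ p ∈ A, HasFDerivWithinAt (planarBranch ε n)
      ((ContinuousLinearMap.toSpanSingleton ℝ (-(ε : ℝ) / p.1 ^ 2)).prodMap
        (ContinuousLinearMap.toSpanSingleton ℝ (-(ε : ℝ) / (ε * p.2 + n) ^ 2))) A p := by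
    intro p hp
    obtain ⟨h1, h2⟩ := hAx p hp
    have d1 : HasDerivAt (fun x : ℝ => (ε : ℝ) / x - n) (-(ε : ℝ) / p.1 ^ 2) p.1 := by
      have := (((hasDerivAt_const p.1 (ε : ℝ)).div (hasDerivAt_id p.1) h1).sub_const (n : ℝ))
      simpa using this
    have d2 : HasDerivAt (fun y : ℝ => 1 / ((ε : ℝ) * y + n)) (-(ε : ℝ) / (ε * p.2 + n) ^ 2)
        p.2 := by
      have := (hasDerivAt_const p.2 (1 : ℝ)).div
        (((hasDerivAt_id p.2).const_mul (ε : ℝ)).add_const (n : ℝ)) h2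
      exact this.congr_deriv (by simp)
    exact (HasFDerivAt.prodMap p d1.hasFDerivAt d2.hasFDerivAt).hasFDerivWithinAt
  rw [lintegral_image_eq_lintegral_abs_det_fderiv_mul volume hA hd
    ((planarBranch_injOn ε n hε0).mono (subset_univ _))]
  refine setLIntegral_congr_fun hA fun p hp => ?_
  obtain ⟨h1, h2⟩ := hAx p hp
  have hdet : ((ContinuousLinearMap.toSpanSingleton ℝ (-(ε : ℝ) / p.1 ^ 2)).prodMap
        (ContinuousLinearMap.toSpanSingleton ℝ (-(ε : ℝ) / (ε * p.2 + n) ^ 2))).det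
      = 1 / (p.1 ^ 2 * (ε * p.2 + n) ^ 2) := by
    rw [ContinuousLinearMap.det, ContinuousLinearMap.coe_prodMap, LinearMap.det_prodMap,
      LinearMap.det_ring, LinearMap.det_ring]
    simp only [ContinuousLinearMap.coe_coe, ContinuousLinearMap.toSpanSingleton_apply, one_smul]
    rw [div_mul_div_comm, neg_mul_neg, ← sq, he]
  have hq : 1 + (planarBranch ε n p).1 * (planarBranch ε n p).2
      = ε * (1 + p.1 * p.2) / (p.1 * (ε * p.2 + n)) := by
    simp only [planarBranch]
    field_simp
    ring
  rw [hdet, hq, ← ENNReal.ofReal_mul (abs_nonneg _), abs_of_nonneg (by positivity)]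
  congr 1
  rw [div_pow, mul_pow, he, one_mul, inv_div, mul_pow]
  field_simp

lemma measurable_epsN : Measurable epsN :=
  Measurable.ite measurableSet_Ioi measurable_const measurable_const

lemma measurable_dN (α : ℝ) : Measurable (dN α) := by
  unfold dN; fun_prop

lemma measurable_nakPlanar (α : ℝ) : Measurable (nakPlanar α) := by
  have h1 : Measurable (nakadaT α) := by
    have : nakadaT α = fun x => if x = 0 then 0 else |1 / x| - (dN α x : ℝ) := rfl
    rw [this]
    have h2 : Measurable fun x => (dN α x : ℝ) := measurable_from_top.comp (measurable_dN α)
    exact Measurable.ite (measurableSet_singleton 0) measurable_const (by fun_prop)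
  have he : Measurable fun x => (epsN x : ℝ) := measurable_from_top.comp measurable_epsN
  have h2 : Measurable fun x => (dN α x : ℝ) := measurable_from_top.comp (measurable_dN α)
  have : nakPlanar α = fun p : ℝ × ℝ => (nakadaT α p.1, 1 / (epsN p.1 * p.2 + dN α p.1)) := by
    funext p; exact nakPlanar_eq α p.1 p.2
  rw [this]
  exact (h1.comp measurable_fst).prodMk (measurable_const.div
    (((he.comp measurable_fst).mul measurable_snd).add (h2.comp measurable_fst)))

lemma muP_absolutelyContinuous : muP ≪ volume := withDensity_absolutelyContinuous _ _

lemma muP_snd_zero : muP {p : ℝ × ℝ | p.2 = 0} = 0 := by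
  apply muP_absolutelyContinuous
  have : {p : ℝ × ℝ | p.2 = 0} = univ ×ˢ {0} := by ext p; simp
  rw [this, Measure.volume_eq_prod, Measure.prod_prod]
  simp

lemma muP_fieldN (α : ℝ) : muP {p : ℝ × ℝ | p.1 ∈ fieldN α} = 0 := by
  apply muP_absolutelyContinuous
  have : {p : ℝ × ℝ | p.1 ∈ fieldN α} = (fieldN α : Set ℝ) ×ˢ univ := by ext p; simp
  rw [this, Measure.volume_eq_prod, Measure.prod_prod, (countable_fieldN α).measure_zero, zero_mul]

/-- The region has finite measure: `1 + x y ≥ α` on it. -/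
lemma muP_LambdaN_lt_top {α : ℝ} (h0 : 0 < α) (hg : α ^ 2 + α ≤ 1) : muP (LambdaN α) < ⊤ := by
  refine (measure_mono (LambdaN_subset h0 hg)).trans_lt ?_
  have hm : MeasurableSet (Icc (α - 1) α ×ˢ Icc (0 : ℝ) 1) := measurableSet_Icc.prod measurableSet_Icc
  rw [muP, withDensity_apply _ hm]
  have hb : ∀ p ∈ Icc (α - 1) α ×ˢ Icc (0 : ℝ) 1,
      ENNReal.ofReal (((1 + p.1 * p.2) ^ 2)⁻¹) ≤ ENNReal.ofReal ((α ^ 2)⁻¹) := by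
    rintro ⟨x, y⟩ ⟨⟨hx1, hx2⟩, hy1, hy2⟩
    simp only at hx1 hx2 hy1 hy2
    have h1 := lt_one_of h0 hg
    have : α ≤ 1 + x * y := by nlinarith
    apply ENNReal.ofReal_le_ofReal
    gcongr
  refine (setLIntegral_mono measurable_const hb).trans_lt ?_
  rw [setLIntegral_const]
  refine ENNReal.mul_lt_top ENNReal.ofReal_lt_top ?_
  exact (isCompact_Icc.prod isCompact_Icc).measure_lt_top

/-! ### The theorem -/

/-- The exceptional condition enters only through this bound, which is its case `n = 1`. -/
lemma golden_bound {α : ℝ} (hα : α ∈ Set.Ioo (0 : ℝ) 1) (h : α ≤ gaussMap α) :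
    α ^ 2 + α ≤ 1 := by
  have h0 : 0 < α := hα.1
  rw [gaussMap, if_neg h0.ne'] at h
  have h1 : (1 : ℤ) ≤ ⌊1 / α⌋ := by
    rw [Int.le_floor, le_div_iff₀ h0]; push_cast; linarith [hα.2]
  have h1' : (1 : ℝ) ≤ ⌊1 / α⌋ := by exact_mod_cast h1
  have h2 : 1 + α ≤ 1 / α := by linarith
  rw [le_div_iff₀ h0] at h2
  linarith

/-- For every `α ∈ (0,1)` in the exceptional set (i.e. with
`Gⁿ(α) ≥ α` for all `n ≥ 1`), the two-dimensional map `𝒯_α` maps `Λ_α` bijectively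
onto itself up to `μ`-measure zero. -/
theorem stmt13 (α : ℝ) (hα : α ∈ Set.Ioo (0 : ℝ) 1)
    (hexc : ∀ n : ℕ, 1 ≤ n → α ≤ gaussMap^[n] α) :
    ∃ Λ₁ Λ₂ : Set (ℝ × ℝ), MeasurableSet Λ₁ ∧ MeasurableSet Λ₂ ∧
      Λ₁ ⊆ LambdaN α ∧ Λ₂ ⊆ LambdaN α ∧
      muP (LambdaN α \ Λ₁) = 0 ∧ muP (LambdaN α \ Λ₂) = 0 ∧
      Set.BijOn (nakPlanar α) Λ₁ Λ₂ := by
  have h0 : 0 < α := hα.1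
  have hg : α ^ 2 + α ≤ 1 := golden_bound hα (by simpa using hexc 1 le_rfl)
  have hΛm : MeasurableSet (LambdaN α) := isClosed_closure.measurableSet
  have hgm : MeasurableSet (genN α) :=
    hΛm.inter (measurable_fst (countable_fieldN α).measurableSet.compl)
  set P : ℤ × ℤ → Set (ℝ × ℝ) := fun a => genN α ∩ {p | (epsN p.1, dN α p.1) = a} with hPdef
  have hPU : ⋃ a, P a = genN α := by
    ext p; simp [hPdef]
  have hdig : Measurable fun p : ℝ × ℝ => (epsN p.1, dN α p.1) :=
    (measurable_epsN.comp measurable_fst).prodMk ((measurable_dN α).comp measurable_fst)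
  have hPm : ∀ a, MeasurableSet (P a) := fun a => hgm.inter (hdig (measurableSet_singleton a))
  have hbr : ∀ a, EqOn (nakPlanar α) (planarBranch a.1 a.2) (P a) := by
    rintro a p ⟨⟨-, hp⟩, rfl⟩
    exact nakPlanar_eq_planarBranch (ne_zero_of_notMem hp)
  have heps : ∀ a, (P a).Nonempty → a.1 = 1 ∨ a.1 = -1 := by
    rintro a ⟨p, -, rfl⟩
    exact epsN_cases p.1
  have hinj : ∀ a, InjOn (nakPlanar α) (P a) := by
    intro a p hp q hq hpq
    rw [hbr a hp, hbr a hq] at hpq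
    have : a.1 ≠ 0 := by rcases heps a ⟨p, hp⟩ with h | h <;> rw [h] <;> norm_num
    exact planarBranch_injOn a.1 a.2 this (mem_univ _) (mem_univ _) hpq
  have hnull : muP (LambdaN α \ genN α) = 0 := by
    refine measure_mono_null ?_ (muP_fieldN α)
    rintro p ⟨hp, hp2⟩
    by_contra h
    exact hp2 ⟨hp, h⟩
  obtain ⟨L₁, L₂, m1, m2, s1, s2, n1, n2, hb⟩ :=
    bijOn_of_piecewise_measurePreserving muP (measurable_nakPlanar α) hPm
      (by
        intro a b hab
        rw [Function.onFun, Set.disjoint_left]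
        rintro p ⟨-, rfl⟩ ⟨-, h⟩
        exact hab h)
      hinj
      (by
        intro a A hA hAP
        rcases A.eq_empty_or_nonempty with rfl | hne
        · simp
        have himg := ((hbr a).mono hAP).image_eq
        have hm := hA.image_of_measurable_injOn (measurable_nakPlanar α) ((hinj a).mono hAP)
        rw [himg] at hm ⊢
        refine muP_planarBranch_image (heps a (hne.mono hAP)) hA (fun p hp => ?_) hm
        obtain ⟨⟨hpΛ, hpF⟩, rfl⟩ := hAP hp
        obtain ⟨b1, b2⟩ := genN_bounds h0 hg hpΛ hpF
        have hp0 := ne_zero_of_notMem hpF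
        have := (digit_facts h0 hg b1 hp0 b2).1
        exact ⟨hp0, by positivity⟩)
      (by
        rw [hPU]
        exact ((measure_mono inter_subset_left).trans_lt (muP_LambdaN_lt_top h0 hg)).ne)
      (by
        rw [hPU]
        exact fun p hp => nakPlanar_mem_genN h0 hg hp)
      (by
        rw [hPU]
        refine measure_mono_null ?_ muP_snd_zero
        rintro p ⟨hp, hp2⟩
        by_contra h
        exact hp2 (exists_preimage_genN h0 hg hp h))
  rw [hPU] at s1 s2 n1 n2
  have hsub : ∀ L, LambdaN α \ L ⊆ (LambdaN α \ genN α) ∪ (genN α \ L) := by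
    rintro L p ⟨hp, hpL⟩
    by_cases h : p ∈ genN α
    · exact Or.inr ⟨h, hpL⟩
    · exact Or.inl ⟨hp, h⟩
  exact ⟨L₁, L₂, m1, m2, s1.trans inter_subset_left, s2.trans inter_subset_left,
    measure_mono_null (hsub L₁) (measure_union_null hnull n1),
    measure_mono_null (hsub L₂) (measure_union_null hnull n2), hb⟩
end
end
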